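/- Let (A, {Δ(λ)}) be a split quasi-hereditary algebra over a commutative Noetherian ring R with characteristic tilting module T, and set B = End_A(T)^op. Then the functor Hom_A(T, −) restricts to an exact equivalence between F(∇̃) over A and F(Δ̃_B) over B, where Δ_B(λ) := Hom_A(T, ∇(λ)); moreover (B, {Δ_B(λ)}_{λ∈Λ^op}) is a split quasi-hereditary R-algebra, where Λ^op carries the opposite partial order. -/

import Mathlib

open scoped TensorProduct
open CategoryTheory

noncomputable section

section Core

variable (R : Type) [CommRing R] (A : Type) [Ring A] [Algebra R A]

/-- The action of `a : A` on an `A`-module as an `R`-linear endomorphism. -/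
def actL (M : Type) [AddCommGroup M] [Module R M] [Module A M] [IsScalarTower R A M]
    (a : A) : M →ₗ[R] M where
  toFun m := a • m
  map_add' := smul_add a
  map_smul' r m := (smul_comm r a m).symm

/-- The right `A`-module (i.e. `Aᵐᵒᵖ`-module) structure on the `R`-linear dual of a left
`A`-module `M`, given by `(aᵒᵖ • f) m = f (a • m)`. -/
instance dualModule (M : Type) [AddCommGroup M] [Module R M] [Module A M]
    [IsScalarTower R A M] : Module Aᵐᵒᵖ (M →ₗ[R] R) where
  smul a f := f.comp (actL R A M a.unop)
  one_smul f := by ext m; show f ((1 : Aᵐᵒᵖ).unop • m) = f m; simp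
  mul_smul a b f := by
    ext m
    show f ((a * b).unop • m) = f (b.unop • a.unop • m)
    simp [mul_smul]
  smul_zero a := rfl
  smul_add a f g := rfl
  add_smul a b f := by
    ext m
    show f ((a + b).unop • m) = f (a.unop • m) + f (b.unop • m)
    simp [add_smul]
  zero_smul f := by ext m; show f ((0 : Aᵐᵒᵖ).unop • m) = 0; simp

@[simp] lemma dualModule_smul_apply (M : Type) [AddCommGroup M] [Module R M] [Module A M]
    [IsScalarTower R A M] (a : Aᵐᵒᵖ) (f : M →ₗ[R] R) (m : M) :
    (a • f) m = f (a.unop • m) := rfl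

instance dualTower (M : Type) [AddCommGroup M] [Module R M] [Module A M]
    [IsScalarTower R A M] : IsScalarTower R Aᵐᵒᵖ (M →ₗ[R] R) := by
  constructor
  intro r a f
  ext m
  show f ((r • a).unop • m) = r • f (a.unop • m)
  rw [MulOpposite.unop_smul, smul_assoc, map_smul]

/-- The left `A`-module structure on the `R`-linear dual of a right `A`-module
(i.e. an `Aᵐᵒᵖ`-module) `M`, given by `(a • f) m = f (aᵒᵖ • m)`. -/
instance dualModule' (M : Type) [AddCommGroup M] [Module R M] [Module Aᵐᵒᵖ M]
    [IsScalarTower R Aᵐᵒᵖ M] : Module A (M →ₗ[R] R) where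
  smul a f := f.comp (actL R Aᵐᵒᵖ M (MulOpposite.op a))
  one_smul f := by ext m; show f (MulOpposite.op (1 : A) • m) = f m; simp
  mul_smul a b f := by
    ext m
    show f (MulOpposite.op (a * b) • m) = f (MulOpposite.op b • MulOpposite.op a • m)
    rw [MulOpposite.op_mul, mul_smul]
  smul_zero a := rfl
  smul_add a f g := rfl
  add_smul a b f := by
    ext m
    show f (MulOpposite.op (a + b) • m) = f (MulOpposite.op a • m) + f (MulOpposite.op b • m)
    rw [MulOpposite.op_add, add_smul, map_add]
  zero_smul f := by ext m; show f (MulOpposite.op (0 : A) • m) = 0; simp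

@[simp] lemma dualModule'_smul_apply (M : Type) [AddCommGroup M] [Module R M] [Module Aᵐᵒᵖ M]
    [IsScalarTower R Aᵐᵒᵖ M] (a : A) (f : M →ₗ[R] R) (m : M) :
    (a • f) m = f (MulOpposite.op a • m) := rfl

instance dualTower' (M : Type) [AddCommGroup M] [Module R M] [Module Aᵐᵒᵖ M]
    [IsScalarTower R Aᵐᵒᵖ M] : IsScalarTower R A (M →ₗ[R] R) := by
  constructor
  intro r a f
  ext m
  show f (MulOpposite.op (r • a) • m) = r • f (MulOpposite.op a • m)
  rw [MulOpposite.op_smul, smul_assoc, map_smul]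

variable (Λ : Type) [Fintype Λ] [PartialOrder Λ]

/-- Data witnessing that `X` is isomorphic to `Δ(λ) ⊗_R U` for some `λ ∈ S` and some finitely
generated projective `R`-module `U`. -/
structure TensorFactor (Δ : Λ → Type) [∀ l, AddCommGroup (Δ l)] [∀ l, Module R (Δ l)]
    [∀ l, Module A (Δ l)] [∀ l, IsScalarTower R A (Δ l)]
    (S : Set Λ) (X : Type) [AddCommGroup X] [Module A X] : Type 1 where
  lam : Λ
  mem : lam ∈ S
  U : ModuleCat.{0} R
  fin : Module.Finite R U
  proj : Module.Projective R U
  iso : X ≃ₗ[A] (TensorProduct R (Δ lam) U)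

/-- `M` belongs to `F(Δ̃_S)`: it is a finitely generated `A`-module with a finite filtration
whose factors are of the form `Δ(λ) ⊗_R U`, `λ ∈ S`, `U` a finitely generated projective
`R`-module. -/
def InFilt (Δ : Λ → Type) [∀ l, AddCommGroup (Δ l)] [∀ l, Module R (Δ l)]
    [∀ l, Module A (Δ l)] [∀ l, IsScalarTower R A (Δ l)]
    (S : Set Λ) (M : Type) [AddCommGroup M] [Module A M] : Prop :=
  Module.Finite A M ∧
  ∃ (n : ℕ) (c : Fin (n + 1) → Submodule A M), c 0 = ⊥ ∧ c (Fin.last n) = ⊤ ∧ Monotone c ∧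
    ∀ i : Fin n, Nonempty (TensorFactor R A Λ Δ S
      (↥(c i.succ) ⧸ (Submodule.comap (c i.succ).subtype (c i.castSucc))))

/-- Data witnessing that `X` is isomorphic to `F(λ)` for some `λ ∈ S`. -/
structure PlainFactor (F : Λ → Type) [∀ l, AddCommGroup (F l)] [∀ l, Module A (F l)]
    (S : Set Λ) (X : Type) [AddCommGroup X] [Module A X] : Type 1 where
  lam : Λ
  mem : lam ∈ S
  iso : X ≃ₗ[A] F lam

/-- `M` has a finite filtration with factors among the modules `F(λ)`, `λ ∈ S`. -/
def InFiltPlain (F : Λ → Type) [∀ l, AddCommGroup (F l)] [∀ l, Module A (F l)]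
    (S : Set Λ) (M : Type) [AddCommGroup M] [Module A M] : Prop :=
  Module.Finite A M ∧
  ∃ (n : ℕ) (c : Fin (n + 1) → Submodule A M), c 0 = ⊥ ∧ c (Fin.last n) = ⊤ ∧ Monotone c ∧
    ∀ i : Fin n, Nonempty (PlainFactor A Λ F S
      (↥(c i.succ) ⧸ (Submodule.comap (c i.succ).subtype (c i.castSucc))))

/-- `X` is a direct summand of `Y` (as `A`-modules). -/
def IsDirectSummand (X Y : Type) [AddCommGroup X] [Module A X] [AddCommGroup Y]
    [Module A Y] : Prop :=
  ∃ (i : X →ₗ[A] Y) (p : Y →ₗ[A] X), p.comp i = LinearMap.id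

/-- `X` belongs to the additive closure `add T`. -/
def InAdd (T : Type) [AddCommGroup T] [Module A T] (X : Type) [AddCommGroup X]
    [Module A X] : Prop :=
  ∃ n : ℕ, IsDirectSummand A X (Fin n → T)

/-- A split quasi-hereditary structure on the `R`-algebra `A` with standard modules
`Δ(λ)`, `λ ∈ Λ` (following Rouquier's module-theoretic definition). -/
structure SplitQH (Δ : Λ → Type) [∀ l, AddCommGroup (Δ l)] [∀ l, Module R (Δ l)]
    [∀ l, Module A (Δ l)] [∀ l, IsScalarTower R A (Δ l)] : Type 1 where
  algFin : Module.Finite R A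
  algProj : Module.Projective R A
  deltaFinA : ∀ l, Module.Finite A (Δ l)
  deltaFinR : ∀ l, Module.Finite R (Δ l)
  deltaProjR : ∀ l, Module.Projective R (Δ l)
  hom_le : ∀ l m : Λ, (∃ f : Δ l →ₗ[A] Δ m, f ≠ 0) → l ≤ m
  endIso : ∀ l, Nonempty ((Module.End A (Δ l)) ≃ₐ[R] R)
  P : Λ → ModuleCat.{0} A
  P_proj : ∀ l, Module.Projective A (P l)
  P_fin : ∀ l, Module.Finite A (P l)
  epi : ∀ l, (P l : Type) →ₗ[A] Δ l
  epi_surj : ∀ l, Function.Surjective (epi l)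
  ker_filt : ∀ l, InFilt R A Λ Δ {m | l < m} ↥(LinearMap.ker (epi l))
  add_gen : ∀ (Q : ModuleCat.{0} A), Module.Finite A Q → Module.Projective A Q →
    InAdd A (∀ l, (P l : Type)) Q

/-- Vanishing of `Ext^i_A(M, N)` (computed in the abelian category of `A`-modules). -/
def extVanish (M : Type) [AddCommGroup M] [Module A M] (N : Type) [AddCommGroup N]
    [Module A N] (i : ℕ) : Prop :=
  Subsingleton (((Ext ℤ (ModuleCat.{0} A) i).obj
    (Opposite.op (ModuleCat.of A M))).obj (ModuleCat.of A N))

/-- `∇` is a family of costandard modules for the split quasi-hereditary algebra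
`(A, {Δ(λ)})`: the `R`-linear duals `D∇(λ)` make `A^op` split quasi-hereditary (with the same
poset), and the `Ext`-orthogonality relations with the standard modules hold. -/
def IsCostandard (Δ : Λ → Type) [∀ l, AddCommGroup (Δ l)] [∀ l, Module R (Δ l)]
    [∀ l, Module A (Δ l)] [∀ l, IsScalarTower R A (Δ l)]
    (N : Λ → Type) [∀ l, AddCommGroup (N l)] [∀ l, Module R (N l)]
    [∀ l, Module A (N l)] [∀ l, IsScalarTower R A (N l)] : Prop :=
  Nonempty (SplitQH R Aᵐᵒᵖ Λ (fun l => (N l →ₗ[R] R))) ∧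
  (∀ l, Nonempty ((Δ l →ₗ[A] N l) ≃ₗ[R] R)) ∧
  (∀ l m, l ≠ m → ∀ f : Δ l →ₗ[A] N m, f = 0) ∧
  (∀ l m : Λ, ∀ i : ℕ, 0 < i → extVanish A (Δ l) (N m) i)

/-- A bundled family of costandard modules. -/
structure CostandardFamily (Δ : Λ → Type) [∀ l, AddCommGroup (Δ l)] [∀ l, Module R (Δ l)]
    [∀ l, Module A (Δ l)] [∀ l, IsScalarTower R A (Δ l)] : Type 1 where
  Nab : Λ → Type
  [acg : ∀ l, AddCommGroup (Nab l)]
  [modR : ∀ l, Module R (Nab l)]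
  [modA : ∀ l, Module A (Nab l)]
  [tower : ∀ l, IsScalarTower R A (Nab l)]
  cost : IsCostandard R A Λ Δ Nab

attribute [instance] CostandardFamily.acg CostandardFamily.modR CostandardFamily.modA
  CostandardFamily.tower

/-- `T` is a family of (partial) tilting modules forming a characteristic tilting module
`⊕ T(λ)`: each `T(λ)` admits an exact sequence `0 → Δ(λ) → T(λ) → X(λ) → 0` with
`X(λ) ∈ F(Δ̃_{μ<λ})` and an exact sequence `0 → Y(λ) → T(λ) → ∇(λ) → 0` with
`Y(λ) ∈ F(∇̃_{μ<λ})`. -/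
def IsCharTilting (Δ : Λ → Type) [∀ l, AddCommGroup (Δ l)] [∀ l, Module R (Δ l)]
    [∀ l, Module A (Δ l)] [∀ l, IsScalarTower R A (Δ l)]
    (N : Λ → Type) [∀ l, AddCommGroup (N l)] [∀ l, Module R (N l)]
    [∀ l, Module A (N l)] [∀ l, IsScalarTower R A (N l)]
    (T : Λ → Type) [∀ l, AddCommGroup (T l)] [∀ l, Module A (T l)] : Prop :=
  ∀ l : Λ,
    (∃ f : Δ l →ₗ[A] T l, Function.Injective f ∧
      InFilt R A Λ Δ {m | m < l} ((T l) ⧸ LinearMap.range f)) ∧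
    (∃ g : T l →ₗ[A] N l, Function.Surjective g ∧
      InFilt R A Λ N {m | m < l} ↥(LinearMap.ker g))

end Core

end

noncomputable section

section RingelDual

variable (R : Type) [CommRing R] (A : Type) [Ring A] [Algebra R A]
variable (T : Type) [AddCommGroup T] [Module A T]

/-- The left module structure on `Hom_A(T, X)` over `B = End_A(T)^op`, by precomposition. -/
instance endOpModule (X : Type) [AddCommGroup X] [Module A X] :
    Module (Module.End A T)ᵐᵒᵖ (T →ₗ[A] X) where
  smul φ g := g.comp φ.unop
  one_smul g := by ext t; rfl
  mul_smul φ ψ g := by ext t; rfl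
  smul_zero φ := rfl
  smul_add φ g g' := rfl
  add_smul φ ψ g := by
    ext t
    show g ((φ + ψ).unop t) = g (φ.unop t) + g (ψ.unop t)
    rw [MulOpposite.unop_add, LinearMap.add_apply, map_add]
  zero_smul g := by
    ext t
    show g ((0 : (Module.End A T)ᵐᵒᵖ).unop t) = 0
    rw [MulOpposite.unop_zero, LinearMap.zero_apply, map_zero]

@[simp] lemma endOpModule_smul_apply (X : Type) [AddCommGroup X] [Module A X]
    (φ : (Module.End A T)ᵐᵒᵖ) (g : T →ₗ[A] X) (t : T) :
    (φ • g) t = g (φ.unop t) := rfl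

instance endOpTower (X : Type) [AddCommGroup X] [Module R X] [Module A X]
    [IsScalarTower R A X] [Module R T] [IsScalarTower R A T] :
    IsScalarTower R (Module.End A T)ᵐᵒᵖ (T →ₗ[A] X) := by
  constructor
  intro r φ g
  ext t
  show g (((r • φ).unop) t) = r • g (φ.unop t)
  rw [MulOpposite.unop_smul, LinearMap.smul_apply, LinearMap.map_smul_of_tower]

/-- The `B`-linear map `Hom_A(T, X) → Hom_A(T, Y)` induced by postcomposition with an
`A`-linear map `f : X → Y`. -/
def Gmap {X Y : Type} [AddCommGroup X] [Module A X] [AddCommGroup Y] [Module A Y]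
    (f : X →ₗ[A] Y) : (T →ₗ[A] X) →ₗ[(Module.End A T)ᵐᵒᵖ] (T →ₗ[A] Y) where
  toFun g := f.comp g
  map_add' g g' := by ext t; simp
  map_smul' φ g := rfl

end RingelDual

/-!
Since `Ext¹_A(Δ(λ), ∇(μ)) = 0` and `T` is filtered by standard modules, `Ext¹_A(T, -)` vanishes on
`F(∇̃)`, so `Hom_A(T, -)` is exact there. The sequences `0 → Y(λ) → T(λ) → ∇(λ) → 0` show, by
tensoring with projectives and by the horseshoe construction, that every `X` in `F(∇̃)` is a
quotient of a module in `add T` by a module in `F(∇̃)`. On `add T` the functor `Hom_A(T, -)` is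
fully faithful by evaluation at the structure maps, and such presentations carry this over to
`F(∇̃)`. Density is an induction on filtrations: `Hom_A(T, P)` is projective over `B` for `P` in
`add T`, so an extension of `Δ_B`-factors lifts to a map which, by fullness, is the image of a map
over `A`, and the pushout along it realizes the extension.

For the quasi-hereditary structure on `B`, the projectives are the `Hom_A(T, T(λ))`, with kernels
filtered by the images of the `Y(λ)`; homomorphisms between the modules `Δ_B(λ)` are those between
the `∇(λ)`, which are read off from the duals `D∇(λ)`, standard modules of `Aᵒᵖ`.
-/

universe u

section ShortExact

variable {A : Type*} [Ring A]
variable {M' M M'' N K P X : Type*} [AddCommGroup M'] [Module A M'] [AddCommGroup M] [Module A M]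
  [AddCommGroup M''] [Module A M''] [AddCommGroup N] [Module A N] [AddCommGroup K] [Module A K]
  [AddCommGroup P] [Module A P] [AddCommGroup X] [Module A X]

/-- The maps `i` and `p` form a short exact sequence `0 → M' → M → M'' → 0` of modules. -/
structure IsShortExact (i : M' →ₗ[A] M) (p : M →ₗ[A] M'') : Prop where
  injective : Function.Injective i
  surjective : Function.Surjective p
  exact : Function.Exact i p

namespace IsShortExact

lemma ker {p : M →ₗ[A] M''} (hp : Function.Surjective p) :
    IsShortExact (LinearMap.ker p).subtype p :=
  ⟨Submodule.subtype_injective _, hp, p.exact_subtype_ker_map⟩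

lemma range {i : M' →ₗ[A] M} (hi : Function.Injective i) :
    IsShortExact i (LinearMap.range i).mkQ :=
  ⟨hi, Submodule.mkQ_surjective _, i.exact_map_mkQ_range⟩

lemma inl_snd : IsShortExact (LinearMap.inl A M' M'') (LinearMap.snd A M' M'') :=
  ⟨LinearMap.inl_injective, LinearMap.snd_surjective, .inl_snd⟩

lemma prodMap_id {κ : K →ₗ[A] P} {π : P →ₗ[A] M} (h : IsShortExact κ π) :
    IsShortExact (LinearMap.inl A P N ∘ₗ κ) (π.prodMap (LinearMap.id : N →ₗ[A] N)) := by
  refine ⟨LinearMap.inl_injective.comp h.injective,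
    h.surjective.prodMap Function.surjective_id, fun ⟨x, y⟩ => ?_⟩
  simp [h.exact x, Prod.ext_iff, and_comm, eq_comm (a := y)]

variable {i : M' →ₗ[A] M} {p : M →ₗ[A] M''}

lemma comp_eq_zero (h : IsShortExact i p) : p ∘ₗ i = 0 :=
  h.exact.linearMap_comp_eq_zero

lemma congr_middle (h : IsShortExact i p) (e : M ≃ₗ[A] N) :
    IsShortExact (e.toLinearMap ∘ₗ i) (p ∘ₗ e.symm.toLinearMap) :=
  ⟨e.injective.comp h.injective, h.surjective.comp e.symm.surjective,
    (LinearEquiv.conj_exact_iff_exact i p e).2 h.exact⟩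

lemma congr_ends (h : IsShortExact i p) (e' : M' ≃ₗ[A] K) (e'' : M'' ≃ₗ[A] N) :
    IsShortExact (i ∘ₗ e'.symm.toLinearMap) (e''.toLinearMap ∘ₗ p) :=
  ⟨h.injective.comp e'.symm.injective, e''.surjective.comp h.surjective,
    LinearEquiv.postcomp_exact_iff_exact.2 (LinearEquiv.precomp_exact_iff_exact.2 h.exact)⟩

lemma exists_desc (h : IsShortExact i p) (f : M →ₗ[A] N) (hf : f ∘ₗ i = 0) :
    ∃ g : M'' →ₗ[A] N, g ∘ₗ p = f := by
  have hker : LinearMap.ker p ≤ LinearMap.ker f := by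
    rw [h.exact.linearMap_ker_eq, LinearMap.range_le_ker_iff, hf]
  refine ⟨(LinearMap.ker p).liftQ f hker ∘ₗ
    (p.quotKerEquivOfSurjective h.surjective).symm.toLinearMap, LinearMap.ext fun x => ?_⟩
  have hx : (p.quotKerEquivOfSurjective h.surjective).symm (p x) = Submodule.Quotient.mk x :=
    (LinearEquiv.symm_apply_eq _).2 rfl
  simp [hx]

lemma exists_factor (h : IsShortExact i p) (f : N →ₗ[A] M) (hf : p ∘ₗ f = 0) :
    ∃ g : N →ₗ[A] M', i ∘ₗ g = f := by
  have hmem (x : N) : f x ∈ LinearMap.range i := (h.exact (f x)).1 (LinearMap.congr_fun hf x)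
  refine ⟨(LinearEquiv.ofInjective i h.injective).symm.toLinearMap ∘ₗ f.codRestrict _ hmem,
    LinearMap.ext fun x => ?_⟩
  exact congrArg Subtype.val ((LinearEquiv.ofInjective i h.injective).apply_symm_apply
    (f.codRestrict _ hmem x))

lemma exists_restrict {j : K →ₗ[A] P} {q : P →ₗ[A] M} (hq : IsShortExact j q)
    (h : IsShortExact i p) :
    ∃ (j' : K →ₗ[A] LinearMap.ker (p ∘ₗ q)) (r : LinearMap.ker (p ∘ₗ q) →ₗ[A] M'),
      (LinearMap.ker (p ∘ₗ q)).subtype ∘ₗ j' = j ∧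
        i ∘ₗ r = q ∘ₗ (LinearMap.ker (p ∘ₗ q)).subtype ∧ IsShortExact j' r := by
  have hpq := ker (p := p ∘ₗ q) (h.surjective.comp hq.surjective)
  obtain ⟨j', hj'⟩ := hpq.exists_factor j <| by
    rw [LinearMap.comp_assoc, hq.comp_eq_zero, LinearMap.comp_zero]
  obtain ⟨r, hr⟩ := h.exists_factor (q ∘ₗ (LinearMap.ker (p ∘ₗ q)).subtype) <| by
    rw [← LinearMap.comp_assoc, hpq.comp_eq_zero]
  have hr_apply (x : LinearMap.ker (p ∘ₗ q)) : i (r x) = q x := LinearMap.congr_fun hr x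
  have hj'_apply (k : K) : (j' k : P) = j k := LinearMap.congr_fun hj' k
  refine ⟨j', r, hj', hr, fun x y hxy => hq.injective ?_, fun x => ?_, fun x => ?_⟩
  · rw [← hj'_apply, hxy, hj'_apply]
  · obtain ⟨y, hy⟩ := hq.surjective (i x)
    have hy' : p (q y) = 0 := by rw [hy, h.exact.apply_apply_eq_zero]
    exact ⟨⟨y, hy'⟩, h.injective (by rw [hr_apply, ← hy])⟩
  · rw [← map_eq_zero_iff i h.injective, hr_apply, hq.exact]
    exact ⟨fun ⟨k, hk⟩ => ⟨k, Subtype.ext ((hj'_apply k).trans hk)⟩,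
      fun ⟨k, hk⟩ => ⟨k, by rw [← hk, hj'_apply]⟩⟩

variable {κ : K →ₗ[A] P} {π : P →ₗ[A] M''}

lemma of_lift (h : IsShortExact i p) (hπ : IsShortExact κ π) {g : P →ₗ[A] M} (hg : p ∘ₗ g = π)
    {m : K →ₗ[A] M'} (hm : i ∘ₗ m = g ∘ₗ κ) : IsShortExact (m.prod (-κ)) (i.coprod g) := by
  have hg_apply (x : P) : p (g x) = π x := LinearMap.congr_fun hg x
  have hm_apply (k : K) : i (m k) = g (κ k) := LinearMap.congr_fun hm k
  refine ⟨fun x y hxy => hπ.injective (neg_injective (Prod.ext_iff.1 hxy).2), fun x => ?_,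
    fun ⟨a, b⟩ => ⟨fun hab => ?_, ?_⟩⟩
  · obtain ⟨b, hb⟩ := hπ.surjective (p x)
    obtain ⟨a, ha⟩ := (h.exact (x - g b)).1 (by rw [map_sub, hg_apply, hb, sub_self])
    exact ⟨(a, b), by simp [ha]⟩
  · have hb : π (-b) = 0 := by
      have := congrArg p hab
      simpa [h.exact.apply_apply_eq_zero, hg_apply] using this
    obtain ⟨k, hk⟩ := (hπ.exact _).1 hb
    refine ⟨k, Prod.ext (h.injective ?_) (by simp [hk])⟩
    calc i (m k) = -g b := by rw [hm_apply, hk, map_neg]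
      _ = i a := neg_eq_of_add_eq_zero_left hab
  · rintro ⟨k, hk⟩
    obtain ⟨rfl, rfl⟩ := Prod.ext_iff.1 hk
    simp [hm_apply]

lemma exists_pushout {K P M'' M' : Type u} [AddCommGroup K] [Module A K] [AddCommGroup P]
    [Module A P] [AddCommGroup M''] [Module A M''] [AddCommGroup M'] [Module A M']
    {κ : K →ₗ[A] P} {π : P →ₗ[A] M''} (hπ : IsShortExact κ π) (m : K →ₗ[A] M') :
    ∃ (E : ModuleCat.{u} A) (i : M' →ₗ[A] E) (p : E →ₗ[A] M'') (g : P →ₗ[A] E),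
      IsShortExact i p ∧ p ∘ₗ g = π ∧ i ∘ₗ m = g ∘ₗ κ := by
  let S := LinearMap.range (m.prod (-κ))
  have hS : S ≤ LinearMap.ker (π ∘ₗ LinearMap.snd A M' P) := by
    rintro _ ⟨k, rfl⟩
    simp [hπ.exact.apply_apply_eq_zero]
  refine ⟨.of A ((M' × P) ⧸ S), S.mkQ ∘ₗ LinearMap.inl A M' P, S.liftQ _ hS,
    S.mkQ ∘ₗ LinearMap.inr A M' P, ⟨?_, ?_, ?_⟩, ?_, ?_⟩
  · refine (injective_iff_map_eq_zero _).2 fun x hx => ?_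
    obtain ⟨k, hk⟩ := (Submodule.Quotient.mk_eq_zero S).1 hx
    obtain ⟨rfl, hk0⟩ := Prod.ext_iff.1 hk
    obtain rfl : k = 0 := (map_eq_zero_iff κ hπ.injective).1 (neg_eq_zero.1 hk0)
    exact map_zero _
  · exact fun z => (hπ.surjective z).imp' (fun y => S.mkQ (0, y)) fun y hy => hy
  · refine (Submodule.mkQ_surjective S).forall.2 fun ⟨x, y⟩ => ⟨fun hxy => ?_, ?_⟩
    · obtain ⟨k, rfl⟩ := (hπ.exact y).1 hxy
      refine ⟨x + m k, (Submodule.Quotient.eq S).2 ⟨k, ?_⟩⟩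
      simp
    · rintro ⟨x', hx'⟩
      rw [← hx']
      simp
  · ext x; simp
  · ext k
    exact (Submodule.Quotient.eq S).2 ⟨k, by simp⟩

lemma nonempty_cokernel_equiv {p' : M →ₗ[A] N} (h : IsShortExact i p) (h' : IsShortExact i p') :
    Nonempty (M'' ≃ₗ[A] N) :=
  ⟨(h.exact.linearEquivOfSurjective h.surjective).symm ≪≫ₗ
    h'.exact.linearEquivOfSurjective h'.surjective⟩

end IsShortExact

end ShortExact

section ExtOrthogonal

/-- `Ext¹_A(M, N) = 0`, expressed without resolutions: every map out of `M` lifts along every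
surjection with kernel `N`. -/
def ExtOrthogonal (A : Type u) [Ring A] (M N : Type u) [AddCommGroup M] [Module A M]
    [AddCommGroup N] [Module A N] : Prop :=
  ∀ ⦃Y Z : Type u⦄ [AddCommGroup Y] [Module A Y] [AddCommGroup Z] [Module A Z]
    (j : N →ₗ[A] Y) (q : Y →ₗ[A] Z), IsShortExact j q →
    ∀ f : M →ₗ[A] Z, ∃ g : M →ₗ[A] Y, q ∘ₗ g = f

namespace ExtOrthogonal

variable {A : Type u} [Ring A]
variable {M' M M'' N' N N'' K P : Type u} [AddCommGroup M'] [Module A M'] [AddCommGroup M]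
  [Module A M] [AddCommGroup M''] [Module A M''] [AddCommGroup N'] [Module A N']
  [AddCommGroup N] [Module A N] [AddCommGroup N''] [Module A N''] [AddCommGroup K] [Module A K]
  [AddCommGroup P] [Module A P]

lemma of_presentation [Module.Projective A P] {κ : K →ₗ[A] P} {π : P →ₗ[A] M}
    (hπ : IsShortExact κ π) (h : ∀ f : K →ₗ[A] N, ∃ g : P →ₗ[A] N, g ∘ₗ κ = f) :
    ExtOrthogonal A M N := by
  intro Y Z _ _ _ _ j q hq f
  obtain ⟨u, hu⟩ := Module.projective_lifting_property q (f ∘ₗ π) hq.surjective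
  obtain ⟨v, hv⟩ := hq.exists_factor (u ∘ₗ κ) <| by
    rw [← LinearMap.comp_assoc, hu, LinearMap.comp_assoc, hπ.comp_eq_zero, LinearMap.comp_zero]
  obtain ⟨w, hw⟩ := h v
  obtain ⟨g, hg⟩ := hπ.exists_desc (u - j ∘ₗ w) <| by
    rw [LinearMap.sub_comp, LinearMap.comp_assoc, hw, hv, sub_self]
  refine ⟨g, (LinearMap.cancel_right hπ.surjective).1 ?_⟩
  rw [LinearMap.comp_assoc, hg, LinearMap.comp_sub, ← LinearMap.comp_assoc, hq.comp_eq_zero,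
    LinearMap.zero_comp, sub_zero, hu]

lemma of_exists_extend (h : ∀ ⦃K P : Type u⦄ [AddCommGroup K] [Module A K] [AddCommGroup P]
    [Module A P] (κ : K →ₗ[A] P) (π : P →ₗ[A] M), Module.Projective A P → IsShortExact κ π →
    ∀ f : K →ₗ[A] N, ∃ g : P →ₗ[A] N, g ∘ₗ κ = f) : ExtOrthogonal A M N :=
  have hM := IsShortExact.ker (Finsupp.linearCombination_id_surjective A M)
  of_presentation hM (h _ _ inferInstance hM)

-- A section of the pushout of the sequence along `f` yields the extension of `f`.
lemma exists_extend (h : ExtOrthogonal A M N) {κ : K →ₗ[A] P} {π : P →ₗ[A] M}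
    (hπ : IsShortExact κ π) (f : K →ₗ[A] N) : ∃ g : P →ₗ[A] N, g ∘ₗ κ = f := by
  obtain ⟨E, i, p, u, hp, hu, hf⟩ := hπ.exists_pushout f
  obtain ⟨s, hs⟩ := h i p hp LinearMap.id
  obtain ⟨g, hg⟩ := hp.exists_factor (u - s ∘ₗ π) <| by
    rw [LinearMap.comp_sub, hu, ← LinearMap.comp_assoc, hs, LinearMap.id_comp, sub_self]
  refine ⟨g, (LinearMap.cancel_left hp.injective).1 ?_⟩
  rw [← LinearMap.comp_assoc, hg, LinearMap.sub_comp, LinearMap.comp_assoc, hπ.comp_eq_zero,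
    LinearMap.comp_zero, sub_zero, hf]

lemma of_exact_left {i : M' →ₗ[A] M} {p : M →ₗ[A] M''} (hp : IsShortExact i p)
    (h' : ExtOrthogonal A M' N) (h'' : ExtOrthogonal A M'' N) : ExtOrthogonal A M N := by
  refine of_exists_extend fun K P _ _ _ _ κ π _ hπ f => ?_
  obtain ⟨κ', r, hκ', -, hr⟩ := hπ.exists_restrict hp
  obtain ⟨g, hg⟩ := h'.exists_extend hr f
  obtain ⟨e, he⟩ := h''.exists_extend (.ker (p := p ∘ₗ π) (hp.surjective.comp hπ.surjective)) g
  exact ⟨e, by rw [← hκ', ← LinearMap.comp_assoc, he, hg]⟩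

lemma of_exact_right {i : N' →ₗ[A] N} {p : N →ₗ[A] N''} (hp : IsShortExact i p)
    (h' : ExtOrthogonal A M N') (h'' : ExtOrthogonal A M N'') : ExtOrthogonal A M N := by
  refine of_exists_extend fun K P _ _ _ _ κ π _ hπ f => ?_
  obtain ⟨u, hu⟩ := h''.exists_extend hπ (p ∘ₗ f)
  obtain ⟨v, rfl⟩ := Module.projective_lifting_property p u hp.surjective
  obtain ⟨w, hw⟩ := hp.exists_factor (f - v ∘ₗ κ) <| by
    rw [LinearMap.comp_sub, ← LinearMap.comp_assoc, hu, sub_self]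
  obtain ⟨g, hg⟩ := h'.exists_extend hπ w
  exact ⟨v + i ∘ₗ g, by rw [LinearMap.add_comp, LinearMap.comp_assoc, hg, hw, add_sub_cancel]⟩

lemma of_subsingleton_left [Subsingleton M] : ExtOrthogonal A M N :=
  fun _ _ _ _ _ _ _ _ _ _ => ⟨0, Subsingleton.elim _ _⟩

lemma of_subsingleton_right [Subsingleton N] : ExtOrthogonal A M N :=
  of_exists_extend fun _ _ _ _ _ _ _ _ _ _ _ => ⟨0, Subsingleton.elim _ _⟩

end ExtOrthogonal

section Resolution

variable {A : Type} [Ring A] {M N : Type} [AddCommGroup M] [Module A M] [AddCommGroup N]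
  [Module A N]

lemma exists_comp_eq_of_extVanish (h : extVanish A M N 1)
    (Q : ProjectiveResolution (ModuleCat.of A M)) (f : Q.complex.X 1 ⟶ ModuleCat.of A N)
    (hf : Q.complex.d 2 1 ≫ f = 0) : ∃ g, Q.complex.d 1 0 ≫ g = f := by
  have hQ : (Q.complex.linearYonedaObj ℤ (ModuleCat.of A N)).ExactAt 1 := by
    rw [HomologicalComplex.exactAt_iff_isZero_homology]
    have : Subsingleton (((Ext ℤ (ModuleCat.{0} A) 1).obj
      (Opposite.op (ModuleCat.of A M))).obj (ModuleCat.of A N)) := h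
    exact (ModuleCat.isZero_of_subsingleton _).of_iso (Q.isoExt (R := ℤ) 1 (ModuleCat.of A N)).symm
  rw [HomologicalComplex.exactAt_iff' _ 0 1 2 (by simp) (by simp),
    ShortComplex.moduleCat_exact_iff] at hQ
  exact hQ f hf

lemma exists_augmentation (Q : ProjectiveResolution (ModuleCat.of A M)) :
    ∃ p : Q.complex.X 0 →ₗ[A] M, Function.Surjective p ∧
      Function.Exact (Q.complex.d 1 0).hom p := by
  let e := (HomologicalComplex.singleObjXSelf (ComplexShape.down ℕ) 0
    (ModuleCat.of A M)).toLinearEquiv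
  have hsurj : Function.Surjective (Q.π.f 0).hom := (ModuleCat.epi_iff_surjective _).1 inferInstance
  refine ⟨e.toLinearMap ∘ₗ (Q.π.f 0).hom, e.surjective.comp hsurj, ?_⟩
  exact LinearEquiv.postcomp_exact_iff_exact.2
    ((ShortComplex.ShortExact.moduleCat_exact_iff_function_exact _).1 Q.exact₀)

lemma ExtOrthogonal.of_extVanish (h : extVanish A M N 1) : ExtOrthogonal A M N := by
  let Q := ProjectiveResolution.of (ModuleCat.of A M)
  obtain ⟨p, hp, hd⟩ := exists_augmentation Q
  have : Module.Projective A (Q.complex.X 0) :=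
    (IsProjective.iff_projective (Q.complex.X 0)).2 (Q.projective 0)
  obtain ⟨δ, hδ⟩ := (IsShortExact.ker hp).exists_factor _ hd.linearMap_comp_eq_zero
  have hδ_surj : Function.Surjective δ := fun x =>
    ((hd x).1 x.2).imp fun y hy => Subtype.ext ((LinearMap.congr_fun hδ y).trans hy)
  refine .of_presentation (.ker hp) fun f => ?_
  obtain ⟨g, hg⟩ := exists_comp_eq_of_extVanish h Q (ModuleCat.ofHom (f ∘ₗ δ)) <| by
    have hδ0 : δ ∘ₗ (Q.complex.d 2 1).hom = 0 := by
      refine (LinearMap.cancel_left (Submodule.subtype_injective _)).1 ?_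
      rw [← LinearMap.comp_assoc, hδ, LinearMap.comp_zero]
      exact congrArg ModuleCat.Hom.hom (Q.complex.d_comp_d 2 1 0)
    refine ModuleCat.hom_ext ?_
    change (f ∘ₗ δ) ∘ₗ (Q.complex.d 2 1).hom = 0
    rw [LinearMap.comp_assoc, hδ0, LinearMap.comp_zero]
  refine ⟨g.hom, (LinearMap.cancel_right hδ_surj).1 ?_⟩
  rw [LinearMap.comp_assoc, hδ]
  exact congrArg ModuleCat.Hom.hom hg

end Resolution

end ExtOrthogonal

section Filtrations

/-- A class of `A`-modules. -/
abbrev ModuleClass (A : Type u) [Ring A] : Type (u + 1) :=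
  ∀ (X : Type u) [AddCommGroup X] [Module A X], Prop

/-- `M` has a finite filtration all of whose factors belong to the class `C`. Building such
modules by iterated extensions replaces chains of submodules by induction. -/
inductive Filt (A : Type u) [Ring A] (C : ModuleClass A) :
    ∀ (M : Type u) [AddCommGroup M] [Module A M], Prop
  | zero (M : Type u) [AddCommGroup M] [Module A M] [Subsingleton M] : Filt A C M
  | step (M' M X : Type u) [AddCommGroup M'] [Module A M'] [AddCommGroup M] [Module A M]
      [AddCommGroup X] [Module A X] (i : M' →ₗ[A] M) (p : M →ₗ[A] X) (hp : IsShortExact i p)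
      (hM' : Filt A C M') (hX : C X) : Filt A C M

variable {A : Type u} [Ring A] {C D : ModuleClass A}
variable {M N M' M'' : Type u} [AddCommGroup M] [Module A M] [AddCommGroup N] [Module A N]
  [AddCommGroup M'] [Module A M'] [AddCommGroup M''] [Module A M'']

namespace Filt

lemma of_equiv (h : Filt A C M) (e : M ≃ₗ[A] N) : Filt A C N := by
  cases h with
  | zero =>
    have := e.symm.injective.subsingleton
    exact .zero N
  | step M' _ X i p hp hM' hX => exact .step M' N X _ _ (hp.congr_middle e) hM' hX

lemma mono (h : Filt A C M) (hCD : ∀ (X : Type u) [AddCommGroup X] [Module A X], C X → D X) :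
    Filt A D M := by
  induction h with
  | zero M => exact .zero M
  | step M' M X i p hp _ hX ih => exact .step M' M X i p hp ih (hCD X hX)

lemma of_mem (h : C M) : Filt A C M :=
  .step PUnit M M 0 LinearMap.id
    ⟨Function.injective_of_subsingleton _, Function.surjective_id, fun x => by simp [eq_comm]⟩
    (.zero PUnit) h

lemma of_exact {i : M' →ₗ[A] M} {p : M →ₗ[A] M''} (hp : IsShortExact i p) (h' : Filt A C M')
    (h'' : Filt A C M'') : Filt A C M := by
  induction h'' generalizing M M' with
  | zero M'' =>
    exact h'.of_equiv <| .ofBijective i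
      ⟨hp.injective, fun x => (hp.exact x).1 (Subsingleton.elim _ _)⟩
  | step N' M'' X j q hq _ hX ih =>
    obtain ⟨i', r, -, -, hr⟩ := hp.exists_restrict hq
    exact .step _ M X _ (q ∘ₗ p) (.ker (p := q ∘ₗ p) (hq.surjective.comp hp.surjective))
      (ih hr h') hX

lemma prod (h : Filt A C M) (h' : Filt A C N) : Filt A C (M × N) :=
  .of_exact .inl_snd h h'

lemma pi {ι : Type u} [Finite ι] {F : ι → Type u} [∀ j, AddCommGroup (F j)]
    [∀ j, Module A (F j)] (h : ∀ j, Filt A C (F j)) : Filt A C (∀ j, F j) := by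
  induction ι using Finite.induction_empty_option with
  | of_equiv e ih => exact (ih fun j => h (e j)).of_equiv (LinearEquiv.piCongrLeft A F e)
  | h_empty => exact .zero _
  | h_option ih =>
    exact ((h none).prod (ih fun j => h (some j))).of_equiv (LinearEquiv.piOptionEquivProd A).symm

lemma ker {i : M' →ₗ[A] M} {p : M →ₗ[A] M''} (hp : IsShortExact i p) (h : Filt A C M') :
    Filt A C (LinearMap.ker p) :=
  h.of_equiv (LinearEquiv.ofInjective i hp.injective ≪≫ₗ
    .ofEq _ _ hp.exact.linearMap_ker_eq.symm)

lemma ker_comp {f : M →ₗ[A] N} {g : N →ₗ[A] M''} (hf : Function.Surjective f)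
    (hg : Function.Surjective g) (h : Filt A C (LinearMap.ker f))
    (h' : Filt A C (LinearMap.ker g)) : Filt A C (LinearMap.ker (g ∘ₗ f)) := by
  obtain ⟨_, _, -, -, hr⟩ := (IsShortExact.ker hf).exists_restrict (.ker hg)
  exact .of_exact hr h h'

lemma finite (hC : ∀ (X : Type u) [AddCommGroup X] [Module A X], C X → Module.Finite A X)
    (h : Filt A C M) : Module.Finite A M := by
  induction h with
  | zero M => infer_instance
  | step M' M X i p hp _ hX ih =>
    have := hC X hX
    exact .of_exact hp.exact hp.surjective

end Filt

lemma ExtOrthogonal.of_filt_left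
    (hC : ∀ (X : Type u) [AddCommGroup X] [Module A X], C X → ExtOrthogonal A X N)
    (h : Filt A C M) : ExtOrthogonal A M N := by
  induction h with
  | zero M => exact .of_subsingleton_left
  | step M' M X i p hp _ hX ih => exact .of_exact_left hp ih (hC X hX)

lemma ExtOrthogonal.of_filt_right
    (hC : ∀ (X : Type u) [AddCommGroup X] [Module A X], C X → ExtOrthogonal A M X)
    (h : Filt A C N) : ExtOrthogonal A M N := by
  induction h with
  | zero N => exact .of_subsingleton_right
  | step N' N X i p hp _ hX ih => exact .of_exact_right hp ih (hC X hX)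

end Filtrations

section Chains

variable {A : Type u} [Ring A] {C : ModuleClass A}
variable {M M' X : Type u} [AddCommGroup M] [Module A M] [AddCommGroup M'] [Module A M']
  [AddCommGroup X] [Module A X]

lemma nonempty_subquotient_map_equiv {i : M' →ₗ[A] M} (hi : Function.Injective i)
    (a b : Submodule A M') :
    Nonempty ((b ⧸ a.comap b.subtype) ≃ₗ[A] (b.map i ⧸ (a.map i).comap (b.map i).subtype)) := by
  refine ⟨Submodule.Quotient.equiv _ _ (Submodule.equivMapOfInjective i hi b) ?_⟩
  ext ⟨_, x, hx, rfl⟩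
  simp only [Submodule.mem_map, Submodule.mem_comap, Submodule.subtype_apply]
  constructor
  · rintro ⟨y, hy, hxy⟩
    exact ⟨y, hy, congrArg Subtype.val hxy⟩
  · rintro ⟨y, hy, hxy⟩
    obtain rfl := hi hxy
    exact ⟨⟨y, hx⟩, hy, rfl⟩

lemma IsShortExact.nonempty_top_quotient_equiv {i : M' →ₗ[A] M} {p : M →ₗ[A] X}
    (hp : IsShortExact i p) :
    Nonempty (X ≃ₗ[A] (⊤ : Submodule A M) ⧸
      (Submodule.map i ⊤).comap (⊤ : Submodule A M).subtype) := by
  have hker : LinearMap.ker (p ∘ₗ (⊤ : Submodule A M).subtype) =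
      (Submodule.map i ⊤).comap (⊤ : Submodule A M).subtype := by
    rw [LinearMap.ker_comp, hp.exact.linearMap_ker_eq, Submodule.map_top]
  have hsurj : Function.Surjective (p ∘ₗ (⊤ : Submodule A M).subtype) :=
    hp.surjective.comp fun x => ⟨⟨x, trivial⟩, rfl⟩
  exact ⟨(LinearMap.quotKerEquivOfSurjective _ hsurj).symm ≪≫ₗ Submodule.quotEquivOfEq _ _ hker⟩

lemma Filt.exists_chain
    (hC : ∀ ⦃X Y : Type u⦄ [AddCommGroup X] [Module A X] [AddCommGroup Y] [Module A Y],
      (X ≃ₗ[A] Y) → C X → C Y) (h : Filt A C M) :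
    ∃ (n : ℕ) (c : Fin (n + 1) → Submodule A M), c 0 = ⊥ ∧ c (Fin.last n) = ⊤ ∧ Monotone c ∧
      ∀ i : Fin n, C (c i.succ ⧸ (c i.castSucc).comap (c i.succ).subtype) := by
  induction h with
  | zero M =>
    exact ⟨0, fun _ => ⊥, rfl, Subsingleton.elim _ _, fun _ _ _ => le_rfl, fun i => i.elim0⟩
  | step M' M X i p hp _ hX ih =>
    obtain ⟨n, c, h_bot, h_top, h_mono, h_mem⟩ := ih
    let c' : Fin (n + 2) → Submodule A M := Fin.snoc (fun j => (c j).map i) ⊤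
    have hc' (j : Fin (n + 1)) : c' j.castSucc = (c j).map i :=
      Fin.snoc_castSucc (α := fun _ => Submodule A M) ..
    have hc'_last : c' (Fin.last (n + 1)) = ⊤ := Fin.snoc_last (α := fun _ => Submodule A M) ..
    refine ⟨n + 1, c', ?_, hc'_last, Fin.monotone_iff_le_succ.2 fun j => ?_, fun j => ?_⟩
    · rw [← Fin.castSucc_zero, hc', h_bot, Submodule.map_bot]
    · induction j using Fin.lastCases with
      | last => rw [Fin.succ_last, hc'_last]; exact le_top
      | cast j =>
        rw [Fin.succ_castSucc, hc', hc']
        exact Submodule.map_mono (h_mono (Fin.castSucc_le_succ j))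
    · induction j using Fin.lastCases with
      | last =>
        rw [Fin.succ_last, hc'_last, hc', h_top]
        exact hC hp.nonempty_top_quotient_equiv.some hX
      | cast j =>
        rw [Fin.succ_castSucc, hc', hc']
        exact hC (nonempty_subquotient_map_equiv hp.injective _ _).some (h_mem j)

lemma Filt.of_chain {n : ℕ} (c : Fin (n + 1) → Submodule A M) (h_bot : c 0 = ⊥)
    (h_top : c (Fin.last n) = ⊤) (h_mono : Monotone c)
    (h_mem : ∀ i : Fin n, C (c i.succ ⧸ (c i.castSucc).comap (c i.succ).subtype)) :
    Filt A C M := by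
  have hc (i : Fin (n + 1)) : Filt A C (c i) := by
    induction i using Fin.induction with
    | zero => rw [h_bot]; exact .zero _
    | succ i ih =>
      exact .step _ _ _ _ _
        ⟨Submodule.subtype_injective _, Submodule.mkQ_surjective _, LinearMap.exact_subtype_mkQ _⟩
        (ih.of_equiv (Submodule.comapSubtypeEquivOfLe (h_mono (Fin.castSucc_le_succ i))).symm)
        (h_mem i)
  exact (hc (Fin.last n)).of_equiv ((LinearEquiv.ofEq _ _ h_top).trans Submodule.topEquiv)

end Chains

section TensorFactors

variable {R : Type} [CommRing R] {A : Type} [Ring A] [Algebra R A] {Λ : Type}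
  {F : Λ → Type} [∀ l, AddCommGroup (F l)] [∀ l, Module R (F l)]
  [∀ l, Module A (F l)] [∀ l, IsScalarTower R A (F l)] {S S' : Set Λ}
variable {X Y : Type} [AddCommGroup X] [Module A X] [AddCommGroup Y] [Module A Y]

variable (R A F S) in
/-- The class of modules isomorphic to `F(λ) ⊗_R U` with `λ ∈ S` and `U` a finitely generated
projective `R`-module. -/
def IsTensorFactor : ModuleClass A :=
  fun X _ _ => Nonempty (TensorFactor R A Λ F S X)

lemma IsTensorFactor.of_equiv (e : X ≃ₗ[A] Y) (h : IsTensorFactor R A F S X) :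
    IsTensorFactor R A F S Y :=
  h.map fun t => { t with iso := e.symm ≪≫ₗ t.iso }

lemma IsTensorFactor.mono (hS : S ⊆ S') (h : IsTensorFactor R A F S X) :
    IsTensorFactor R A F S' X :=
  h.map fun t => { t with mem := hS t.mem }

lemma IsTensorFactor.self {l : Λ} (hl : l ∈ S) : IsTensorFactor R A F S (F l) :=
  ⟨⟨l, hl, ModuleCat.of R R, inferInstanceAs (Module.Finite R R),
    inferInstanceAs (Module.Projective R R), (TensorProduct.AlgebraTensorModule.rid R A _).symm⟩⟩

lemma InFilt.filt (h : InFilt R A Λ F S X) : Filt A (IsTensorFactor R A F S) X := by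
  obtain ⟨-, n, c, h_bot, h_top, h_mono, h_mem⟩ := h
  exact .of_chain c h_bot h_top h_mono h_mem

end TensorFactors

section AdditiveClosure

variable {A : Type} [Ring A] {T X Y : Type} [AddCommGroup T] [Module A T] [AddCommGroup X]
  [Module A X] [AddCommGroup Y] [Module A Y]

namespace InAdd

lemma of_sum_comp_eq_id {ι : Type} [Fintype ι] (e : ι → T →ₗ[A] X) (e' : ι → X →ₗ[A] T)
    (h : ∑ j, e j ∘ₗ e' j = LinearMap.id) : InAdd A T X := by
  let σ := (Fintype.equivFin ι).symm
  refine ⟨Fintype.card ι, .pi fun j => e' (σ j), ∑ j, e (σ j) ∘ₗ .proj j, ?_⟩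
  rw [← h, ← σ.sum_comp]
  ext x
  simp

lemma exists_sum_comp_eq_id (h : InAdd A T X) :
    ∃ (n : ℕ) (e : Fin n → T →ₗ[A] X) (e' : Fin n → X →ₗ[A] T),
      ∑ j, e j ∘ₗ e' j = LinearMap.id := by
  obtain ⟨n, i, p, hpi⟩ := h
  refine ⟨n, fun j => p ∘ₗ .single A (fun _ => T) j, fun j => .proj j ∘ₗ i,
    LinearMap.ext fun x => ?_⟩
  calc (∑ j, (p ∘ₗ .single A (fun _ => T) j) ∘ₗ .proj j ∘ₗ i) x
      = p (∑ j, Pi.single j (i x j)) := by simp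
    _ = x := by rw [Finset.univ_sum_single]; exact LinearMap.congr_fun hpi x

lemma of_retract (i : X →ₗ[A] T) (p : T →ₗ[A] X) (hpi : p ∘ₗ i = LinearMap.id) : InAdd A T X :=
  of_sum_comp_eq_id (ι := Unit) (fun _ => p) (fun _ => i) (by simpa using hpi)

lemma of_equiv (h : InAdd A T X) (e : X ≃ₗ[A] Y) : InAdd A T Y := by
  obtain ⟨n, i, p, hpi⟩ := h
  refine ⟨n, i ∘ₗ e.symm.toLinearMap, e.toLinearMap ∘ₗ p, LinearMap.ext fun y => ?_⟩
  simpa using congrArg e (LinearMap.congr_fun hpi (e.symm y))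

lemma of_subsingleton [Subsingleton X] : InAdd A T X :=
  of_retract 0 0 (Subsingleton.elim _ _)

lemma prod (hX : InAdd A T X) (hY : InAdd A T Y) : InAdd A T (X × Y) := by
  obtain ⟨m, e, e', he⟩ := hX.exists_sum_comp_eq_id
  obtain ⟨n, f, f', hf⟩ := hY.exists_sum_comp_eq_id
  refine of_sum_comp_eq_id (ι := Fin m ⊕ Fin n)
    (Sum.elim (fun j => .inl A X Y ∘ₗ e j) fun j => .inr A X Y ∘ₗ f j)
    (Sum.elim (fun j => e' j ∘ₗ .fst A X Y) fun j => f' j ∘ₗ .snd A X Y) ?_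
  calc _ = .inl A X Y ∘ₗ (∑ j, e j ∘ₗ e' j) ∘ₗ .fst A X Y +
        .inr A X Y ∘ₗ (∑ j, f j ∘ₗ f' j) ∘ₗ .snd A X Y := by
          ext x <;> simp [Prod.fst_sum, Prod.snd_sum]
    _ = LinearMap.id := by rw [he, hf]; ext x <;> simp

lemma trans (hX : InAdd A T X) (hY : InAdd A X Y) : InAdd A T Y := by
  obtain ⟨m, e, e', he⟩ := hX.exists_sum_comp_eq_id
  obtain ⟨n, f, f', hf⟩ := hY.exists_sum_comp_eq_id
  refine of_sum_comp_eq_id (ι := Fin n × Fin m) (fun j => f j.1 ∘ₗ e j.2)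
    (fun j => e' j.2 ∘ₗ f' j.1) ?_
  calc ∑ j : Fin n × Fin m, (f j.1 ∘ₗ e j.2) ∘ₗ e' j.2 ∘ₗ f' j.1
      = ∑ j, f j ∘ₗ (∑ k, e k ∘ₗ e' k) ∘ₗ f' j := by
          rw [Fintype.sum_prod_type]
          refine Finset.sum_congr rfl fun j _ => ?_
          ext x
          simp
    _ = LinearMap.id := by simpa [he] using hf

lemma finite [Module.Finite A T] (h : InAdd A T X) : Module.Finite A X := by
  obtain ⟨n, i, p, hpi⟩ := h
  exact .of_surjective p fun x => ⟨i x, LinearMap.congr_fun hpi x⟩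

lemma projective [Module.Projective A T] (h : InAdd A T X) : Module.Projective A X := by
  obtain ⟨n, i, p, hpi⟩ := h
  have : Module.Projective A (Fin n → T) :=
    .of_equiv (DirectSum.linearEquivFunOnFintype A (Fin n) fun _ => T)
  exact .of_split i p hpi

lemma hom_ext (h : InAdd A T X) {f g : X →ₗ[A] Y} (hfg : ∀ u : T →ₗ[A] X, f ∘ₗ u = g ∘ₗ u) :
    f = g := by
  obtain ⟨n, e, e', he⟩ := h.exists_sum_comp_eq_id
  calc f = f ∘ₗ ∑ j, e j ∘ₗ e' j := by rw [he, LinearMap.comp_id]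
    _ = ∑ j, (f ∘ₗ e j) ∘ₗ e' j := by ext x; simp
    _ = ∑ j, (g ∘ₗ e j) ∘ₗ e' j := by simp only [hfg]
    _ = g ∘ₗ ∑ j, e j ∘ₗ e' j := by ext x; simp
    _ = g := by rw [he, LinearMap.comp_id]

lemma extOrthogonal_left (h : InAdd A T X) (hT : ExtOrthogonal A T Y) : ExtOrthogonal A X Y := by
  obtain ⟨n, e, e', he⟩ := h.exists_sum_comp_eq_id
  intro V W _ _ _ _ j q hq f
  choose g hg using fun k => hT j q hq (f ∘ₗ e k)
  refine ⟨∑ k, g k ∘ₗ e' k, ?_⟩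
  calc q ∘ₗ ∑ k, g k ∘ₗ e' k = ∑ k, (q ∘ₗ g k) ∘ₗ e' k := by ext x; simp
    _ = f ∘ₗ ∑ k, e k ∘ₗ e' k := by ext x; simp [hg]
    _ = f := by rw [he, LinearMap.comp_id]

lemma extOrthogonal_right (h : InAdd A T X) (hT : ExtOrthogonal A Y T) : ExtOrthogonal A Y X := by
  obtain ⟨n, e, e', he⟩ := h.exists_sum_comp_eq_id
  refine .of_exists_extend fun K P _ _ _ _ κ π _ hπ f => ?_
  choose g hg using fun k => hT.exists_extend hπ (e' k ∘ₗ f)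
  refine ⟨∑ k, e k ∘ₗ g k, ?_⟩
  calc (∑ k, e k ∘ₗ g k) ∘ₗ κ = ∑ k, e k ∘ₗ g k ∘ₗ κ := by ext x; simp
    _ = (∑ k, e k ∘ₗ e' k) ∘ₗ f := by ext x; simp [hg]
    _ = f := by rw [he, LinearMap.id_comp]

section Hom

variable {R : Type} [CommRing R] [Algebra R A]

lemma hom_left [Module R Y] [IsScalarTower R A Y] (h : InAdd A T X) :
    InAdd R (T →ₗ[A] Y) (X →ₗ[A] Y) := by
  obtain ⟨n, e, e', he⟩ := h.exists_sum_comp_eq_id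
  refine of_sum_comp_eq_id (fun j => .lcomp R Y (e' j)) (fun j => .lcomp R Y (e j))
    (LinearMap.ext fun f => ?_)
  calc _ = f ∘ₗ ∑ j, e j ∘ₗ e' j := by ext x; simp
    _ = f := by rw [he, LinearMap.comp_id]

lemma hom_right [Module R T] [IsScalarTower R A T] [Module R X] [IsScalarTower R A X]
    (h : InAdd A T X) : InAdd R (Y →ₗ[A] T) (Y →ₗ[A] X) := by
  obtain ⟨n, e, e', he⟩ := h.exists_sum_comp_eq_id
  refine of_sum_comp_eq_id (fun j => .compRight R (e j)) (fun j => .compRight R (e' j))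
    (LinearMap.ext fun f => ?_)
  calc _ = (∑ j, e j ∘ₗ e' j) ∘ₗ f := by ext x; simp
    _ = f := by rw [he, LinearMap.id_comp]

end Hom

end InAdd

end AdditiveClosure

section FiniteProjective

/-- `H` is a finitely generated projective `R`-module. -/
structure FiniteProjective (R : Type) [Ring R] (H : Type) [AddCommGroup H] [Module R H] :
    Prop where
  finite : Module.Finite R H
  projective : Module.Projective R H

variable {R : Type} [Ring R] {H K L : Type} [AddCommGroup H] [Module R H] [AddCommGroup K]
  [Module R K] [AddCommGroup L] [Module R L]

lemma InAdd.finiteProjective (h : InAdd R H K) (hH : FiniteProjective R H) :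
    FiniteProjective R K :=
  have := hH.finite
  have := hH.projective
  ⟨h.finite, h.projective⟩

namespace FiniteProjective

lemma self : FiniteProjective R R :=
  ⟨inferInstance, inferInstance⟩

lemma of_subsingleton [Subsingleton H] : FiniteProjective R H :=
  ⟨inferInstance, inferInstance⟩

lemma of_equiv (h : FiniteProjective R H) (e : H ≃ₗ[R] K) : FiniteProjective R K :=
  ((InAdd.of_retract .id .id rfl).of_equiv e).finiteProjective h

lemma of_exact {i : H →ₗ[R] K} {p : K →ₗ[R] L} (hp : IsShortExact i p)
    (hH : FiniteProjective R H) (hL : FiniteProjective R L) : FiniteProjective R K := by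
  have := hH.finite
  have := hH.projective
  have := hL.finite
  have := hL.projective
  have hs := Module.projective_lifting_property p LinearMap.id hp.surjective
  let e := (hp.exact.splitSurjectiveEquiv hp.injective ⟨_, hs.choose_spec⟩).1
  exact of_equiv (H := H × L) ⟨inferInstance, inferInstance⟩ e.symm

lemma inAdd (h : FiniteProjective R H) : InAdd R R H := by
  have := h.finite
  have := h.projective
  obtain ⟨n, p, i, -, -, hpi⟩ := Module.Finite.exists_comp_eq_id_of_projective R H
  exact ⟨n, i, p, hpi⟩

lemma exists_dualBasis (h : FiniteProjective R H) :
    ∃ (n : ℕ) (u : Fin n → H) (φ : Fin n → H →ₗ[R] R), ∀ x, ∑ j, φ j x • u j = x := by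
  obtain ⟨n, e, e', he⟩ := h.inAdd.exists_sum_comp_eq_id
  refine ⟨n, fun j => e j 1, e', fun x => ?_⟩
  simpa [← map_smul] using LinearMap.congr_fun he x

end FiniteProjective

end FiniteProjective

section FilteredHom

variable {R : Type} [CommRing R] {A : Type} [Ring A] [Algebra R A] {C : ModuleClass A}
variable {M M' M'' N N' N'' : Type} [AddCommGroup M] [Module A M] [AddCommGroup M']
  [Module A M'] [AddCommGroup M''] [Module A M''] [AddCommGroup N] [Module A N]
  [AddCommGroup N'] [Module A N'] [AddCommGroup N''] [Module A N'']

lemma IsShortExact.lcomp [Module R N] [IsScalarTower R A N] {i : M' →ₗ[A] M} {p : M →ₗ[A] M''}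
    (hp : IsShortExact i p) (h : ExtOrthogonal A M'' N) :
    IsShortExact (LinearMap.lcomp R N p) (LinearMap.lcomp R N i) := by
  refine ⟨fun _ _ => (LinearMap.cancel_right hp.surjective).1, h.exists_extend hp,
    fun f => ⟨hp.exists_desc f, ?_⟩⟩
  rintro ⟨g, rfl⟩
  exact LinearMap.ext fun x => by simp [hp.exact.apply_apply_eq_zero]

lemma IsShortExact.map_Gmap {i : N' →ₗ[A] N} {p : N →ₗ[A] N''} (hp : IsShortExact i p)
    (h : ExtOrthogonal A M N') : IsShortExact (Gmap A M i) (Gmap A M p) := by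
  refine ⟨fun _ _ => (LinearMap.cancel_left hp.injective).1, h i p hp,
    fun f => ⟨hp.exists_factor f, ?_⟩⟩
  rintro ⟨g, rfl⟩
  exact LinearMap.ext fun x => hp.exact.apply_apply_eq_zero (g x)

lemma IsShortExact.compRight [Module R N'] [IsScalarTower R A N'] [Module R N]
    [IsScalarTower R A N] [Module R N''] [IsScalarTower R A N''] {i : N' →ₗ[A] N}
    {p : N →ₗ[A] N''} (hp : IsShortExact i p) (h : ExtOrthogonal A M N') :
    IsShortExact (LinearMap.compRight R (M := M) i) (LinearMap.compRight R (M := M) p) :=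
  have hG := hp.map_Gmap h
  ⟨hG.injective, hG.surjective, hG.exact⟩

lemma Filt.finiteProjective_hom_left [Module R N] [IsScalarTower R A N]
    (hC : ∀ (X : Type) [AddCommGroup X] [Module A X], C X → ExtOrthogonal A X N)
    (hC' : ∀ (X : Type) [AddCommGroup X] [Module A X], C X → FiniteProjective R (X →ₗ[A] N))
    (h : Filt A C M) : FiniteProjective R (M →ₗ[A] N) := by
  induction h with
  | zero M => exact .of_subsingleton
  | step M' M X i p hp _ hX ih => exact .of_exact (hp.lcomp (hC X hX)) (hC' X hX) ih

lemma Filt.finiteProjective_hom_right [instR : Module R N] [instT : IsScalarTower R A N]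
    (hC : ∀ (X : Type) [AddCommGroup X] [Module A X], C X → ExtOrthogonal A M X)
    (hC' : ∀ (X : Type) [AddCommGroup X] [Module A X] [Module R X] [IsScalarTower R A X],
      C X → FiniteProjective R (M →ₗ[A] X))
    (h : Filt A C N) : FiniteProjective R (M →ₗ[A] N) := by
  induction h generalizing instR instT with
  | zero N => exact .of_subsingleton
  | step N' N X i p hp hN' hX ih =>
    let _ : Module R N' := Module.compHom N' (algebraMap R A)
    let _ : Module R X := Module.compHom X (algebraMap R A)
    have : IsScalarTower R A N' := .of_compHom R A N'
    have : IsScalarTower R A X := .of_compHom R A X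
    exact .of_exact (hp.compRight (.of_filt_right hC hN')) ih (hC' X hX)

end FilteredHom

section Tensor

variable {R : Type} [CommRing R] {A : Type} [Ring A] [Algebra R A]
variable {M M' M'' N U : Type} [AddCommGroup M] [Module R M] [Module A M] [IsScalarTower R A M]
  [AddCommGroup M'] [Module R M'] [Module A M'] [IsScalarTower R A M']
  [AddCommGroup M''] [Module R M''] [Module A M''] [IsScalarTower R A M'']
  [AddCommGroup N] [Module R N] [Module A N] [IsScalarTower R A N]
  [AddCommGroup U] [Module R U]

lemma IsShortExact.tensor [Module.Flat R U] {i : M' →ₗ[A] M} {p : M →ₗ[A] M''}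
    (hp : IsShortExact i p) :
    IsShortExact (TensorProduct.AlgebraTensorModule.map i (LinearMap.id : U →ₗ[R] U))
      (TensorProduct.AlgebraTensorModule.map p (LinearMap.id : U →ₗ[R] U)) :=
  ⟨Module.Flat.rTensor_preserves_injective_linearMap (M := U) (i.restrictScalars R) hp.injective,
    LinearMap.rTensor_surjective U (g := p.restrictScalars R) hp.surjective,
    rTensor_exact U (f := i.restrictScalars R) (g := p.restrictScalars R) hp.exact hp.surjective⟩

variable (A N) in
/-- Contraction of `N ⊗ U` with a linear form on `U`. -/
def tensorContract (φ : U →ₗ[R] R) : N ⊗[R] U →ₗ[A] N :=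
  (TensorProduct.AlgebraTensorModule.rid R A N).toLinearMap ∘ₗ
    TensorProduct.AlgebraTensorModule.map LinearMap.id φ

@[simp] lemma tensorContract_tmul (φ : U →ₗ[R] R) (n : N) (u : U) :
    tensorContract A N φ (n ⊗ₜ u) = φ u • n := by
  simp [tensorContract]

variable (R A N) in
/-- The map `n ↦ n ⊗ u`. -/
def tensorInsert (u : U) : N →ₗ[A] N ⊗[R] U :=
  (TensorProduct.AlgebraTensorModule.mk R A N U).flip u

@[simp] lemma tensorInsert_apply (u : U) (n : N) : tensorInsert R A N u n = n ⊗ₜ u := rfl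

lemma sum_tensorInsert_comp_tensorContract {n : ℕ} {u : Fin n → U} {φ : Fin n → U →ₗ[R] R}
    (h : ∀ x, ∑ j, φ j x • u j = x) :
    ∑ j, tensorInsert R A N (u j) ∘ₗ tensorContract A N (φ j) = LinearMap.id := by
  refine TensorProduct.AlgebraTensorModule.ext fun x y => ?_
  simp only [LinearMap.sum_apply, LinearMap.comp_apply, tensorContract_tmul, tensorInsert_apply,
    LinearMap.id_apply, TensorProduct.smul_tmul, ← TensorProduct.tmul_sum, h]

lemma FiniteProjective.inAdd_tensor (hU : FiniteProjective R U) : InAdd A N (N ⊗[R] U) := by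
  obtain ⟨n, u, φ, h⟩ := hU.exists_dualBasis
  exact .of_sum_comp_eq_id _ _ (sum_tensorInsert_comp_tensorContract h)

lemma tensorContract_comp_tensorInsert (φ : U →ₗ[R] R) (u : U) :
    tensorContract A N φ ∘ₗ tensorInsert R A N u = φ u • LinearMap.id := by
  ext x
  simp

end Tensor

section TensorFiltrations

variable {R : Type} [CommRing R] {A : Type} [Ring A] [Algebra R A] {Λ : Type}
  {F : Λ → Type} [∀ l, AddCommGroup (F l)] [∀ l, Module R (F l)]
  [∀ l, Module A (F l)] [∀ l, IsScalarTower R A (F l)] {S : Set Λ}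
variable {X U : Type} [AddCommGroup X] [Module A X] [AddCommGroup U] [Module R U]

lemma IsTensorFactor.of_tensor {l : Λ} (hl : l ∈ S) (hU : FiniteProjective R U) :
    IsTensorFactor R A F S (F l ⊗[R] U) :=
  ⟨⟨l, hl, ModuleCat.of R U, hU.finite, hU.projective, .refl A _⟩⟩

lemma IsTensorFactor.exists_inAdd (h : IsTensorFactor R A F S X) : ∃ l, InAdd A (F l) X := by
  obtain ⟨l, -, U, hf, hp, e⟩ := h
  exact ⟨l, (FiniteProjective.inAdd_tensor ⟨hf, hp⟩).of_equiv e.symm⟩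

lemma IsTensorFactor.finite (hF : ∀ l, Module.Finite A (F l)) (h : IsTensorFactor R A F S X) :
    Module.Finite A X :=
  have ⟨l, hl⟩ := h.exists_inAdd
  have := hF l
  hl.finite

lemma Filt.inFilt (hF : ∀ l, Module.Finite A (F l))
    (h : Filt A (IsTensorFactor R A F S) X) : InFilt R A Λ F S X :=
  ⟨h.finite fun _ _ _ hX => hX.finite hF, h.exists_chain fun _ _ _ _ _ _ e hX => hX.of_equiv e⟩

lemma IsTensorFactor.tensor [Module R X] [IsScalarTower R A X] (hU : FiniteProjective R U)
    (h : IsTensorFactor R A F S X) : IsTensorFactor R A F S (X ⊗[R] U) := by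
  obtain ⟨l, hl, V, hVf, hVp, e⟩ := h
  have := hU.finite
  have := hU.projective
  have hVU : FiniteProjective R (V ⊗[R] U) := ⟨inferInstance, inferInstance⟩
  exact (IsTensorFactor.of_tensor hl hVU).of_equiv <|
    (TensorProduct.AlgebraTensorModule.congr e (.refl R U) ≪≫ₗ
      TensorProduct.AlgebraTensorModule.assoc R R A (F l) V U).symm

lemma Filt.tensor [instR : Module R X] [instT : IsScalarTower R A X] (hU : FiniteProjective R U)
    (h : Filt A (IsTensorFactor R A F S) X) : Filt A (IsTensorFactor R A F S) (X ⊗[R] U) := by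
  induction h generalizing instR instT with
  | zero X => exact .zero _
  | step X' X W i p hp _ hW ih =>
    let _ : Module R X' := Module.compHom X' (algebraMap R A)
    let _ : Module R W := Module.compHom W (algebraMap R A)
    have : IsScalarTower R A X' := .of_compHom R A X'
    have : IsScalarTower R A W := .of_compHom R A W
    have := hU.projective
    exact .step _ _ _ _ _ hp.tensor ih (hW.tensor hU)

end TensorFiltrations

section Cover

variable {A : Type} [Ring A] {T : Type} [AddCommGroup T] [Module A T] {C : ModuleClass A}
variable {P X Y : Type} [AddCommGroup P] [Module A P] [AddCommGroup X] [Module A X]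
  [AddCommGroup Y] [Module A Y]

variable (A T C X) in
/-- `X` is a quotient of a module in `add T` by a module with a filtration by the class `C`. -/
def HasCover : Prop :=
  ∃ (P : ModuleCat.{0} A) (π : P →ₗ[A] X), InAdd A T P ∧ Function.Surjective π ∧
    Filt A C (LinearMap.ker π)

lemma HasCover.of_equiv (e : X ≃ₗ[A] Y) (h : HasCover A T C X) : HasCover A T C Y := by
  obtain ⟨P, π, hP, hπ, hK⟩ := h
  refine ⟨P, e.toLinearMap ∘ₗ π, hP, e.surjective.comp hπ, ?_⟩
  rwa [LinearEquiv.ker_comp]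

lemma HasCover.tensor {R Λ : Type} [CommRing R] [Algebra R A] {F : Λ → Type}
    [∀ l, AddCommGroup (F l)] [∀ l, Module R (F l)] [∀ l, Module A (F l)]
    [∀ l, IsScalarTower R A (F l)] {S : Set Λ} {U : Type} [AddCommGroup U] [Module R U]
    [Module R X] [IsScalarTower R A X] (hU : FiniteProjective R U)
    (h : HasCover A T (IsTensorFactor R A F S) X) :
    HasCover A T (IsTensorFactor R A F S) (X ⊗[R] U) := by
  obtain ⟨P, π, hP, hπ, hK⟩ := h
  let _ : Module R P := Module.compHom P (algebraMap R A)
  have : IsScalarTower R A P := .of_compHom R A P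
  have := hU.projective
  have hπU := (IsShortExact.ker hπ).tensor (R := R) (U := U)
  exact ⟨.of A (P ⊗[R] U), _, hP.trans hU.inAdd_tensor, hπU.surjective, (hK.tensor hU).ker hπU⟩

lemma IsTensorFactor.hasCover {R Λ : Type} [CommRing R] [Algebra R A] {F : Λ → Type}
    [∀ l, AddCommGroup (F l)] [∀ l, Module R (F l)] [∀ l, Module A (F l)]
    [∀ l, IsScalarTower R A (F l)] {S : Set Λ}
    (hF : ∀ l ∈ S, HasCover A T (IsTensorFactor R A F S) (F l))
    (h : IsTensorFactor R A F S X) : HasCover A T (IsTensorFactor R A F S) X := by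
  obtain ⟨l, hl, U, hf, hp, e⟩ := h
  exact ((hF l hl).tensor ⟨hf, hp⟩).of_equiv e.symm

variable (A T C) in
/-- `T` is an `Ext`-projective generator of the modules filtered by the class `C`: `Ext¹(T, -)`
vanishes on `C`, and every module in `C` is a quotient of a module in `add T` by a module filtered
by `C`. It is not required that `T` is itself filtered by `C`. -/
structure IsExtProjectiveGenerator : Prop where
  extOrthogonal_of_mem : ∀ (X : Type) [AddCommGroup X] [Module A X], C X → ExtOrthogonal A T X
  hasCover_of_mem : ∀ (X : Type) [AddCommGroup X] [Module A X], C X → HasCover A T C X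

namespace IsExtProjectiveGenerator

lemma extOrthogonal (hT : IsExtProjectiveGenerator A T C) (h : Filt A C X) :
    ExtOrthogonal A T X :=
  .of_filt_right hT.extOrthogonal_of_mem h

-- The horseshoe: lift the cover of the top factor to `X` and add it to the cover of the rest.
lemma hasCover (hT : IsExtProjectiveGenerator A T C) (h : Filt A C X) : HasCover A T C X := by
  induction h with
  | zero X =>
    exact ⟨.of A PUnit, 0, .of_subsingleton, fun x => ⟨0, Subsingleton.elim _ _⟩, .zero _⟩
  | step X' X W i p hp hX' hW ih =>
    obtain ⟨P', π', hP', hπ', hK'⟩ := ih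
    obtain ⟨P'', π'', hP'', hπ'', hK''⟩ := hT.hasCover_of_mem W hW
    obtain ⟨g, hg⟩ := hP''.extOrthogonal_left (hT.extOrthogonal hX') i p hp π''
    obtain ⟨m, hm⟩ := hp.exists_factor (g ∘ₗ (LinearMap.ker π'').subtype) <| by
      rw [← LinearMap.comp_assoc, hg, (IsShortExact.ker hπ'').comp_eq_zero]
    have hsum := (IsShortExact.ker hπ').prodMap_id (N := P'')
    have hlift := hp.of_lift (.ker hπ'') hg hm
    exact ⟨.of A (P' × P''), i.coprod g ∘ₗ π'.prodMap LinearMap.id, hP'.prod hP'',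
      hlift.surjective.comp hsum.surjective,
      .ker_comp hsum.surjective hlift.surjective (hK'.ker hsum) (hK''.ker hlift)⟩

end IsExtProjectiveGenerator

end Cover

section HomFunctor

variable {A : Type} [Ring A] {T : Type} [AddCommGroup T] [Module A T]
variable {P T' X X' X'' Y : Type} [AddCommGroup P] [Module A P] [AddCommGroup T'] [Module A T']
  [AddCommGroup X] [Module A X] [AddCommGroup X'] [Module A X'] [AddCommGroup X''] [Module A X'']
  [AddCommGroup Y] [Module A Y]

variable (A T) in
/-- The ring `B = End_A(T)ᵒᵖ` over which the modules `Hom_A(T, X)` live. -/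
abbrev EndOp : Type := (Module.End A T)ᵐᵒᵖ

@[simp] lemma Gmap_apply (f : X →ₗ[A] Y) (g : T →ₗ[A] X) : Gmap A T f g = f ∘ₗ g := rfl

lemma Gmap_comp (f : X →ₗ[A] Y) (g : X' →ₗ[A] X) : Gmap A T (f ∘ₗ g) = Gmap A T f ∘ₗ Gmap A T g :=
  rfl

variable (T) in
/-- The isomorphism `Hom_A(T, X) ≃ Hom_A(T, Y)` induced by an isomorphism `X ≃ Y`. -/
def GmapEquiv (e : X ≃ₗ[A] Y) : (T →ₗ[A] X) ≃ₗ[EndOp A T] (T →ₗ[A] Y) :=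
  .ofLinearMap (Gmap A T e.toLinearMap) (Gmap A T e.symm.toLinearMap) (by ext; simp) (by ext; simp)

lemma InAdd.map_Gmap (h : InAdd A T' X) : InAdd (EndOp A T) (T →ₗ[A] T') (T →ₗ[A] X) := by
  obtain ⟨n, e, e', he⟩ := h.exists_sum_comp_eq_id
  refine of_sum_comp_eq_id (fun j => Gmap A T (e j)) (fun j => Gmap A T (e' j))
    (LinearMap.ext fun f => ?_)
  calc _ = (∑ j, e j ∘ₗ e' j) ∘ₗ f := by ext x; simp
    _ = f := by rw [he, LinearMap.id_comp]

lemma FiniteProjective.hom_self : FiniteProjective (EndOp A T) (T →ₗ[A] T) :=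
  FiniteProjective.self.of_equiv
    { toFun := MulOpposite.unop
      invFun := MulOpposite.op
      map_add' := MulOpposite.unop_add
      map_smul' := fun _ _ => rfl }

lemma InAdd.finiteProjective_hom (h : InAdd A T P) : FiniteProjective (EndOp A T) (T →ₗ[A] P) :=
  h.map_Gmap.finiteProjective .hom_self

-- Every `g : T → P` is a `B`-linear combination of the structure maps `e j : T → P`.
lemma InAdd.Gmap_surjective (h : InAdd A T P) :
    Function.Surjective (fun f : P →ₗ[A] Y => Gmap A T f) := by
  obtain ⟨n, e, e', he⟩ := h.exists_sum_comp_eq_id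
  intro φ
  refine ⟨∑ j, φ (e j) ∘ₗ e' j, LinearMap.ext fun g => ?_⟩
  have hg : g = ∑ j, MulOpposite.op (e' j ∘ₗ g) • e j := by
    ext x
    simpa using (LinearMap.congr_fun he (g x)).symm
  conv_rhs => rw [hg, map_sum]
  ext x
  simp

lemma HasCover.Gmap_injective {C : ModuleClass A} (h : HasCover A T C X) :
    Function.Injective (fun f : X →ₗ[A] Y => Gmap A T f) := by
  obtain ⟨P, π, hP, hπ, -⟩ := h
  intro f g hfg
  exact (LinearMap.cancel_right hπ).1 (hP.hom_ext fun u => LinearMap.congr_fun hfg (π ∘ₗ u))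

namespace IsExtProjectiveGenerator

variable {C : ModuleClass A}

lemma Gmap_bijective (hT : IsExtProjectiveGenerator A T C) (h : Filt A C X) :
    Function.Bijective (fun f : X →ₗ[A] Y => Gmap A T f) := by
  refine ⟨(hT.hasCover h).Gmap_injective, fun φ => ?_⟩
  obtain ⟨P, π, hP, hπ, hK⟩ := hT.hasCover h
  have hGπ := (IsShortExact.ker hπ).map_Gmap (hT.extOrthogonal hK)
  obtain ⟨f, hf : Gmap A T f = φ ∘ₗ Gmap A T π⟩ := hP.Gmap_surjective (φ ∘ₗ Gmap A T π)
  have hf0 : f ∘ₗ (LinearMap.ker π).subtype = 0 := (hT.hasCover hK).Gmap_injective <| by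
    change Gmap A T f ∘ₗ Gmap A T (LinearMap.ker π).subtype = 0
    rw [hf, LinearMap.comp_assoc, hGπ.comp_eq_zero, LinearMap.comp_zero]
  obtain ⟨g, rfl⟩ := (IsShortExact.ker hπ).exists_desc f hf0
  exact ⟨g, (LinearMap.cancel_right hGπ.surjective).1 hf⟩

-- Both the given extension and the image of the pushout are cokernels of the same map
-- `Hom(T, K) → Hom(T, X') × Hom(T, P)`, where `0 → K → P → X'' → 0` is a cover of `X''`.
lemma exists_extension (hT : IsExtProjectiveGenerator A T C) (h' : Filt A C X') (h'' : C X'')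
    {Z : Type} [AddCommGroup Z] [Module (EndOp A T) Z]
    {j : (T →ₗ[A] X') →ₗ[EndOp A T] Z} {q : Z →ₗ[EndOp A T] (T →ₗ[A] X'')}
    (hq : IsShortExact j q) :
    ∃ X : ModuleCat.{0} A, Filt A C X ∧ Nonempty (Z ≃ₗ[EndOp A T] (T →ₗ[A] X)) := by
  obtain ⟨P, π, hP, hπ, hK⟩ := hT.hasCover_of_mem X'' h''
  have hκπ := IsShortExact.ker hπ
  have hGκπ := hκπ.map_Gmap (hT.extOrthogonal hK)
  have := hP.finiteProjective_hom.projective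
  obtain ⟨ψ, hψ⟩ := Module.projective_lifting_property q (Gmap A T π) hq.surjective
  obtain ⟨m', hm'⟩ := hq.exists_factor (ψ ∘ₗ Gmap A T (LinearMap.ker π).subtype) <| by
    rw [← LinearMap.comp_assoc, hψ, hGκπ.comp_eq_zero]
  obtain ⟨m, rfl : Gmap A T m = m'⟩ := (hT.Gmap_bijective hK).2 m'
  obtain ⟨X, i, p, g, hip, hpg, him⟩ := hκπ.exists_pushout m
  have hG := (hip.map_Gmap (hT.extOrthogonal h')).of_lift hGκπ (g := Gmap A T g) (m := Gmap A T m)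
    (by rw [← Gmap_comp, hpg]) (by rw [← Gmap_comp, him, Gmap_comp])
  exact ⟨X, .step _ _ _ i p hip h' h'', (hq.of_lift hGκπ hψ hm').nonempty_cokernel_equiv hG⟩

lemma exists_equiv_of_filt (hT : IsExtProjectiveGenerator A T C) {D : ModuleClass (EndOp A T)}
    (hD : ∀ (Z : Type) [AddCommGroup Z] [Module (EndOp A T) Z], D Z →
      ∃ X : ModuleCat.{0} A, C X ∧ Nonempty (Z ≃ₗ[EndOp A T] (T →ₗ[A] X)))
    {Z : Type} [AddCommGroup Z] [Module (EndOp A T) Z] (h : Filt (EndOp A T) D Z) :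
    ∃ X : ModuleCat.{0} A, Filt A C X ∧ Nonempty (Z ≃ₗ[EndOp A T] (T →ₗ[A] X)) := by
  induction h with
  | zero Z => exact ⟨.of A PUnit, .zero _, ⟨.ofSubsingleton _ _⟩⟩
  | step Z' Z Q j q hq _ hQ ih =>
    obtain ⟨X', hX', ⟨e'⟩⟩ := ih
    obtain ⟨X'', hX'', ⟨e''⟩⟩ := hD Q hQ
    exact hT.exists_extension hX' hX'' (hq.congr_ends e' e'')

end IsExtProjectiveGenerator

lemma Filt.map_Gmap {C : ModuleClass A} {D : ModuleClass (EndOp A T)}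
    (hC : ∀ (X : Type) [AddCommGroup X] [Module A X], C X → ExtOrthogonal A T X)
    (hD : ∀ (X : Type) [AddCommGroup X] [Module A X], C X → D (T →ₗ[A] X))
    (h : Filt A C X) : Filt (EndOp A T) D (T →ₗ[A] X) := by
  induction h with
  | zero X => exact .zero _
  | step X' X W i p hp hX' hW ih =>
    exact .step _ _ _ _ _ (hp.map_Gmap (.of_filt_right hC hX')) ih (hD W hW)

end HomFunctor

section HomTensor

variable {R : Type} [CommRing R] {A : Type} [Ring A] [Algebra R A]
variable {N T U : Type} [AddCommGroup N] [Module R N] [Module A N] [IsScalarTower R A N]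
  [AddCommGroup T] [Module R T] [Module A T] [IsScalarTower R A T] [AddCommGroup U] [Module R U]

variable (A T N) in
lemma FiniteProjective.nonempty_hom_tensor_equiv (hU : FiniteProjective R U) :
    Nonempty ((T →ₗ[A] N) ⊗[R] U ≃ₗ[EndOp A T] (T →ₗ[A] N ⊗[R] U)) := by
  obtain ⟨n, u, φ, h⟩ := hU.exists_dualBasis
  let θ : (T →ₗ[A] N) ⊗[R] U →ₗ[EndOp A T] (T →ₗ[A] N ⊗[R] U) :=
    ∑ j, Gmap A T (tensorInsert R A N (u j)) ∘ₗ tensorContract (EndOp A T) _ (φ j)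
  let θ' : (T →ₗ[A] N ⊗[R] U) →ₗ[EndOp A T] (T →ₗ[A] N) ⊗[R] U :=
    ∑ j, tensorInsert R (EndOp A T) _ (u j) ∘ₗ Gmap A T (tensorContract A N (φ j))
  have hθ (f : T →ₗ[A] N) (x : U) : θ (f ⊗ₜ x) = tensorInsert R A N x ∘ₗ f := by
    ext t
    conv_rhs => rw [← h x]
    simp [θ, TensorProduct.tmul_sum]
  refine ⟨.ofLinearMap θ θ' (LinearMap.ext fun f => ?_)
    (TensorProduct.AlgebraTensorModule.ext fun f x => ?_)⟩
  · calc θ (θ' f) = (∑ j, tensorInsert R A N (u j) ∘ₗ tensorContract A N (φ j)) ∘ₗ f := by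
          ext t
          simp [θ', hθ]
      _ = f := by rw [sum_tensorInsert_comp_tensorContract h, LinearMap.id_comp]
  · calc θ' (θ (f ⊗ₜ x)) = ∑ j, (φ j x • f) ⊗ₜ u j := by
          rw [hθ]
          simp [θ', ← LinearMap.comp_assoc, tensorContract_comp_tensorInsert, LinearMap.smul_comp,
            TensorProduct.smul_tmul']
      _ = f ⊗ₜ x := by simp only [TensorProduct.smul_tmul, ← TensorProduct.tmul_sum, h]

end HomTensor

section ExtOrthogonalFamilies

variable {R : Type} [CommRing R] {A : Type} [Ring A] [Algebra R A] {Λ : Type}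
variable {F : Λ → Type} [∀ l, AddCommGroup (F l)] [∀ l, Module R (F l)]
  [∀ l, Module A (F l)] [∀ l, IsScalarTower R A (F l)]
variable {N : Λ → Type} [∀ l, AddCommGroup (N l)] [∀ l, Module R (N l)]
  [∀ l, Module A (N l)] [∀ l, IsScalarTower R A (N l)]
variable {S S' : Set Λ} {X Y : Type} [AddCommGroup X] [Module A X] [AddCommGroup Y] [Module A Y]

lemma IsTensorFactor.extOrthogonal (h : ∀ l m, ExtOrthogonal A (F l) (N m))
    (hX : IsTensorFactor R A F S X) (hY : IsTensorFactor R A N S' Y) : ExtOrthogonal A X Y := by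
  obtain ⟨l, hl⟩ := hX.exists_inAdd
  obtain ⟨m, hm⟩ := hY.exists_inAdd
  exact hl.extOrthogonal_left (hm.extOrthogonal_right (h l m))

lemma Filt.extOrthogonal (h : ∀ l m, ExtOrthogonal A (F l) (N m))
    (hX : Filt A (IsTensorFactor R A F S) X) (hY : Filt A (IsTensorFactor R A N S') Y) :
    ExtOrthogonal A X Y :=
  .of_filt_left (fun _ _ _ hX => .of_filt_right (fun _ _ _ => hX.extOrthogonal h) hY) hX

lemma Filt.finiteProjective_hom [Module R Y] [IsScalarTower R A Y]
    (h : ∀ l m, ExtOrthogonal A (F l) (N m)) (h' : ∀ l m, FiniteProjective R (F l →ₗ[A] N m))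
    (hX : Filt A (IsTensorFactor R A F S) X) (hY : Filt A (IsTensorFactor R A N S') Y) :
    FiniteProjective R (X →ₗ[A] Y) := by
  refine hX.finiteProjective_hom_left
    (fun X _ _ hX => .of_filt_right (fun _ _ _ => hX.extOrthogonal h) hY)
    fun X _ _ hX => hY.finiteProjective_hom_right (fun _ _ _ => hX.extOrthogonal h)
      fun Y _ _ _ _ hY => ?_
  obtain ⟨l, hl⟩ := hX.exists_inAdd
  obtain ⟨m, hm⟩ := hY.exists_inAdd
  exact hl.hom_left.finiteProjective (hm.hom_right.finiteProjective (h' l m))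

end ExtOrthogonalFamilies

section DualMap

variable {R : Type} [CommRing R] {A : Type} [Ring A] [Algebra R A]
variable {M N : Type} [AddCommGroup M] [Module R M] [Module A M] [IsScalarTower R A M]
  [AddCommGroup N] [Module R N] [Module A N] [IsScalarTower R A N]

variable (R) in
/-- The transpose of an `A`-linear map, as a map of right `A`-modules. -/
def dualMapOp (f : M →ₗ[A] N) : (N →ₗ[R] R) →ₗ[Aᵐᵒᵖ] (M →ₗ[R] R) where
  toFun g := g ∘ₗ f.restrictScalars R
  map_add' _ _ := rfl
  map_smul' a g := by
    ext m
    simp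

@[simp] lemma dualMapOp_apply (f : M →ₗ[A] N) (g : N →ₗ[R] R) (m : M) :
    dualMapOp R f g m = g (f m) := rfl

lemma dualMapOp_injective (hN : FiniteProjective R N) :
    Function.Injective (dualMapOp R : (M →ₗ[A] N) → _) := fun f g hfg => by
  have := hN.projective
  ext m
  refine sub_eq_zero.1 ((Module.forall_dual_apply_eq_zero_iff R _).1 fun φ => ?_)
  rw [map_sub, sub_eq_zero]
  exact LinearMap.congr_fun (LinearMap.congr_fun hfg φ) m

lemma algebraMap_end_bijective_of_dual (hN : FiniteProjective R N)
    (h : Nonempty (Module.End Aᵐᵒᵖ (N →ₗ[R] R) ≃ₐ[R] R)) :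
    Function.Bijective (algebraMap R (Module.End A N)) := by
  obtain ⟨e⟩ := h
  have hdual (r : R) : dualMapOp R (algebraMap R (Module.End A N) r) =
      algebraMap R (Module.End Aᵐᵒᵖ (N →ₗ[R] R)) r := by
    ext g m
    simp
  have he (r : R) : e (algebraMap R (Module.End Aᵐᵒᵖ (N →ₗ[R] R)) r) = r := e.commutes r
  constructor
  · intro r s hrs
    rw [← he r, ← hdual, hrs, hdual, he]
  · intro f
    refine ⟨e (dualMapOp R f), dualMapOp_injective hN (e.injective ?_)⟩
    rw [hdual, he]

lemma nonempty_end_hom_equiv {T : Type} [AddCommGroup T] [Module R T] [Module A T]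
    [IsScalarTower R A T] (hG : Function.Bijective (fun f : N →ₗ[A] N => Gmap A T f))
    (h : Function.Bijective (algebraMap R (Module.End A N))) :
    Nonempty (Module.End (EndOp A T) (T →ₗ[A] N) ≃ₐ[R] R) := by
  have hcomp : ⇑(Algebra.ofId R (Module.End (EndOp A T) (T →ₗ[A] N))) =
      (fun f : N →ₗ[A] N => Gmap A T f) ∘ algebraMap R (Module.End A N) := by
    ext r f x
    simp [Algebra.ofId_apply]
  exact ⟨(AlgEquiv.ofBijective (Algebra.ofId R _) (hcomp ▸ hG.comp h)).symm⟩

end DualMap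

section FiniteProducts

variable {A : Type} [Ring A] {Λ : Type}
variable (T : Λ → Type) [∀ l, AddCommGroup (T l)] [∀ l, Module A (T l)]

lemma inAdd_pi (l : Λ) :
    InAdd A (∀ l, T l) (T l) := by
  classical
  exact .of_retract (.single A T l) (.proj l) (LinearMap.proj_comp_single_same A T l)

lemma inAdd_pi_hom_endOp :
    InAdd (EndOp A (∀ l, T l)) (∀ m, (∀ l, T l) →ₗ[A] T m) (EndOp A (∀ l, T l)) :=
  .of_retract (LinearMap.pi fun m => LinearMap.toSpanSingleton _ _ (LinearMap.proj m))
    { toFun := fun x => MulOpposite.op (LinearMap.pi x)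
      map_add' := fun _ _ => rfl
      map_smul' := fun _ _ => rfl } rfl

end FiniteProducts

section CharacteristicTilting

variable {R : Type} [CommRing R] {A : Type} [Ring A] [Algebra R A] {Λ : Type} [PartialOrder Λ]
variable {Δ : Λ → Type} [∀ l, AddCommGroup (Δ l)] [∀ l, Module R (Δ l)]
  [∀ l, Module A (Δ l)] [∀ l, IsScalarTower R A (Δ l)]
variable {N : Λ → Type} [∀ l, AddCommGroup (N l)] [∀ l, Module R (N l)]
  [∀ l, Module A (N l)] [∀ l, IsScalarTower R A (N l)]

namespace IsCostandard

lemma extOrthogonal (hc : IsCostandard R A Λ Δ N) (l m : Λ) : ExtOrthogonal A (Δ l) (N m) :=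
  .of_extVanish (hc.2.2.2 l m 1 one_pos)

lemma finiteProjective_hom (hc : IsCostandard R A Λ Δ N) (l m : Λ) :
    FiniteProjective R (Δ l →ₗ[A] N m) := by
  obtain rfl | hlm := eq_or_ne l m
  · obtain ⟨e⟩ := hc.2.1 l
    exact FiniteProjective.self.of_equiv e.symm
  · have : Subsingleton (Δ l →ₗ[A] N m) := subsingleton_of_forall_eq 0 (hc.2.2.1 l m hlm)
    exact .of_subsingleton

lemma le_of_ne_zero (hc : IsCostandard R A Λ Δ N) {l m : Λ} (hm : FiniteProjective R (N m))
    {f : N l →ₗ[A] N m} (hf : f ≠ 0) : m ≤ l := by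
  obtain ⟨hD⟩ := hc.1
  have h0 : dualMapOp R (0 : N l →ₗ[A] N m) = 0 := by ext; simp
  exact hD.hom_le m l ⟨dualMapOp R f, fun hf0 => hf (dualMapOp_injective hm (hf0.trans h0.symm))⟩

end IsCostandard

lemma SplitQH.filt_P (h : SplitQH R A Λ Δ) (l : Λ) :
    Filt A (IsTensorFactor R A Δ Set.univ) (h.P l) :=
  .step _ _ _ _ _ (.ker (h.epi_surj l))
    ((h.ker_filt l).filt.mono fun _ _ _ hX => hX.mono (Set.subset_univ _)) (.self (Set.mem_univ l))

-- `∇(λ) = Hom_A(A, ∇(λ))` is a summand of a power of `Hom_A(⊕ P(μ), ∇(λ))`.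
lemma SplitQH.finiteProjective_costandard [Finite Λ] (h : SplitQH R A Λ Δ)
    (hc : IsCostandard R A Λ Δ N) (l : Λ) : FiniteProjective R (N l) := by
  have hA : InAdd A (∀ l, (h.P l : Type)) A := h.add_gen (.of A A)
    (inferInstanceAs (Module.Finite A A)) (inferInstanceAs (Module.Projective A A))
  have hP : FiniteProjective R ((∀ l, (h.P l : Type)) →ₗ[A] N l) :=
    Filt.finiteProjective_hom hc.extOrthogonal hc.finiteProjective_hom (.pi h.filt_P)
      (.of_mem (.self (Set.mem_univ l)))
  exact (hA.hom_left.finiteProjective hP).of_equiv (LinearMap.ringLmapEquivSelf A R (N l))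

variable {T : Λ → Type} [∀ l, AddCommGroup (T l)] [∀ l, Module A (T l)]

namespace IsCharTilting

lemma filt_standard (hT : IsCharTilting R A Λ Δ N T) (l : Λ) :
    Filt A (IsTensorFactor R A Δ Set.univ) (T l) := by
  obtain ⟨f, hf, hX⟩ := (hT l).1
  exact .of_exact (.range hf) (.of_mem (.self (Set.mem_univ l)))
    (hX.filt.mono fun _ _ _ hX => hX.mono (Set.subset_univ _))

lemma filt_costandard (hT : IsCharTilting R A Λ Δ N T) (l : Λ) :
    Filt A (IsTensorFactor R A N Set.univ) (T l) := by
  obtain ⟨g, hg, hY⟩ := (hT l).2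
  exact .step _ _ _ _ _ (.ker hg) (hY.filt.mono fun _ _ _ hX => hX.mono (Set.subset_univ _))
    (.self (Set.mem_univ l))

end IsCharTilting

end CharacteristicTilting

section RingelStandard

variable {R : Type} [CommRing R] {A : Type} [Ring A] [Algebra R A] {Λ : Type}
variable {N : Λ → Type} [∀ l, AddCommGroup (N l)] [∀ l, Module R (N l)]
  [∀ l, Module A (N l)] [∀ l, IsScalarTower R A (N l)]

variable (A N) in
/-- The standard modules `Δ_B(λ) = Hom_A(T, ∇(λ))` of the Ringel dual, indexed by the opposite
poset `Λᵒᵈ`. -/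
abbrev ringelStandard (T : Type) [AddCommGroup T] [Module A T] (l : Λᵒᵈ) : Type :=
  T →ₗ[A] N (OrderDual.ofDual l)

namespace IsTensorFactor

variable {T : Type} [AddCommGroup T] [Module A T] [Module R T] [IsScalarTower R A T] {S : Set Λ}

variable (T) in
lemma map_Gmap {X : Type} [AddCommGroup X] [Module A X] (h : IsTensorFactor R A N S X) :
    IsTensorFactor R (EndOp A T) (ringelStandard A N T) (OrderDual.ofDual ⁻¹' S) (T →ₗ[A] X) := by
  obtain ⟨l, hl, U, hf, hp, e⟩ := h
  obtain ⟨e'⟩ := FiniteProjective.nonempty_hom_tensor_equiv A (N l) T ⟨hf, hp⟩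
  exact ⟨⟨OrderDual.toDual l, hl, U, hf, hp, GmapEquiv T e ≪≫ₗ e'.symm⟩⟩

lemma exists_equiv_hom {Z : Type} [AddCommGroup Z] [Module (EndOp A T) Z]
    (h : IsTensorFactor R (EndOp A T) (ringelStandard A N T) (OrderDual.ofDual ⁻¹' S) Z) :
    ∃ X : ModuleCat.{0} A, IsTensorFactor R A N S X ∧
      Nonempty (Z ≃ₗ[EndOp A T] (T →ₗ[A] X)) := by
  obtain ⟨l, hl, U, hf, hp, e⟩ := h
  obtain ⟨e'⟩ := FiniteProjective.nonempty_hom_tensor_equiv A (N (OrderDual.ofDual l)) T ⟨hf, hp⟩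
  exact ⟨.of A (N (OrderDual.ofDual l) ⊗[R] U), .of_tensor hl ⟨hf, hp⟩, ⟨e ≪≫ₗ e'⟩⟩

end IsTensorFactor

variable [PartialOrder Λ] {Δ : Λ → Type} [∀ l, AddCommGroup (Δ l)] [∀ l, Module R (Δ l)]
  [∀ l, Module A (Δ l)] [∀ l, IsScalarTower R A (Δ l)]
variable {T : Λ → Type} [∀ l, AddCommGroup (T l)] [∀ l, Module A (T l)]

namespace IsCharTilting

lemma extOrthogonal [Finite Λ] (hT : IsCharTilting R A Λ Δ N T) (hc : IsCostandard R A Λ Δ N)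
    {S : Set Λ} {X : Type} [AddCommGroup X] [Module A X]
    (hX : Filt A (IsTensorFactor R A N S) X) : ExtOrthogonal A (∀ l, T l) X :=
  Filt.extOrthogonal hc.extOrthogonal (.pi hT.filt_standard) hX

lemma finiteProjective_hom [Finite Λ] (hT : IsCharTilting R A Λ Δ N T)
    (hc : IsCostandard R A Λ Δ N) {X : Type} [AddCommGroup X] [Module A X] [Module R X]
    [IsScalarTower R A X] (hX : Filt A (IsTensorFactor R A N Set.univ) X) :
    FiniteProjective R ((∀ l, T l) →ₗ[A] X) :=
  Filt.finiteProjective_hom hc.extOrthogonal hc.finiteProjective_hom (.pi hT.filt_standard) hX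

lemma isExtProjectiveGenerator [Finite Λ] (hT : IsCharTilting R A Λ Δ N T)
    (hc : IsCostandard R A Λ Δ N) :
    IsExtProjectiveGenerator A (∀ l, T l) (IsTensorFactor R A N Set.univ) where
  extOrthogonal_of_mem _ _ _ hX := hT.extOrthogonal hc (.of_mem hX)
  hasCover_of_mem _ _ _ hX := hX.hasCover fun l _ =>
    have ⟨g, hg, hY⟩ := (hT l).2
    ⟨.of A (T l), g, inAdd_pi T l, hg, hY.filt.mono fun _ _ _ hX => hX.mono (Set.subset_univ _)⟩

variable [∀ l, Module R (T l)] [∀ l, IsScalarTower R A (T l)]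

lemma finite_ringelStandard [Finite Λ] (hT : IsCharTilting R A Λ Δ N T)
    (hc : IsCostandard R A Λ Δ N) (l : Λᵒᵈ) :
    Module.Finite (EndOp A (∀ l, T l)) (ringelStandard A N (∀ l, T l) l) :=
  have := (hT.finiteProjective_hom hc (.of_mem (.self (Set.mem_univ (OrderDual.ofDual l))))).finite
  .of_restrictScalars_finite R _ _

lemma filt_hom [Finite Λ] (hT : IsCharTilting R A Λ Δ N T) (hc : IsCostandard R A Λ Δ N)
    {S : Set Λ} {X : Type} [AddCommGroup X] [Module A X]
    (hX : Filt A (IsTensorFactor R A N S) X) :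
    Filt (EndOp A (∀ l, T l)) (IsTensorFactor R (EndOp A (∀ l, T l))
      (ringelStandard A N (∀ l, T l)) (OrderDual.ofDual ⁻¹' S)) ((∀ l, T l) →ₗ[A] X) :=
  hX.map_Gmap (fun _ _ _ hX => hT.extOrthogonal hc (.of_mem hX)) fun _ _ _ hX => hX.map_Gmap _

lemma nonempty_splitQH [Finite Λ] (hT : IsCharTilting R A Λ Δ N T) (hc : IsCostandard R A Λ Δ N)
    (hN : ∀ l, FiniteProjective R (N l)) :
    Nonempty (SplitQH R (EndOp A (∀ l, T l)) Λᵒᵈ (ringelStandard A N (∀ l, T l))) := by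
  obtain ⟨hD⟩ := hc.1
  have hgen := hT.isExtProjectiveGenerator hc
  have hB : FiniteProjective R (EndOp A (∀ l, T l)) :=
    (hT.finiteProjective_hom hc (.pi hT.filt_costandard)).of_equiv (MulOpposite.opLinearEquiv R)
  have hN' (l : Λ) : Filt A (IsTensorFactor R A N Set.univ) (N l) :=
    .of_mem (.self (Set.mem_univ l))
  have hΔ (l : Λ) := hT.finiteProjective_hom hc (hN' l)
  choose g hg hY using fun l => (hT l).2
  have hGg (l : Λ) := (IsShortExact.ker (hg l)).map_Gmap (hT.extOrthogonal hc (hY l).filt)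
  have hP (l : Λ) : FiniteProjective (EndOp A (∀ l, T l)) ((∀ l, T l) →ₗ[A] T l) :=
    (inAdd_pi T l).finiteProjective_hom
  exact ⟨{
    algFin := hB.finite
    algProj := hB.projective
    deltaFinA := hT.finite_ringelStandard hc
    deltaFinR := fun l => (hΔ (OrderDual.ofDual l)).finite
    deltaProjR := fun l => (hΔ (OrderDual.ofDual l)).projective
    hom_le := by
      rintro l m ⟨φ, hφ⟩
      obtain ⟨f, rfl⟩ := (hgen.Gmap_bijective (hN' (OrderDual.ofDual l))).2 φ
      refine hc.le_of_ne_zero (hN _) (f := f) ?_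
      rintro rfl
      exact hφ (LinearMap.ext LinearMap.zero_comp)
    endIso := fun l => nonempty_end_hom_equiv (hgen.Gmap_bijective (hN' (OrderDual.ofDual l)))
      (algebraMap_end_bijective_of_dual (hN _) (hD.endIso _))
    P := fun l => .of _ ((∀ l, T l) →ₗ[A] T (OrderDual.ofDual l))
    P_proj := fun l => (hP (OrderDual.ofDual l)).projective
    P_fin := fun l => (hP (OrderDual.ofDual l)).finite
    epi := fun l => Gmap A (∀ l, T l) (g (OrderDual.ofDual l))
    epi_surj := fun l => (hGg (OrderDual.ofDual l)).surjective
    ker_filt := fun l => ((hT.filt_hom hc (hY (OrderDual.ofDual l)).filt).ker (hGg _)).inFilt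
      (hT.finite_ringelStandard hc)
    add_gen := fun Q hf hp =>
      (inAdd_pi_hom_endOp T).trans (FiniteProjective.inAdd ⟨hf, hp⟩) }⟩

end IsCharTilting

end RingelStandard

theorem ringel_dual_functor_equivalence_general
    (R : Type) [CommRing R] (A : Type) [Ring A] [Algebra R A]
    (Λ : Type) [Finite Λ] [PartialOrder Λ]
    (Δ : Λ → Type) [∀ l, AddCommGroup (Δ l)] [∀ l, Module R (Δ l)]
    [∀ l, Module A (Δ l)] [∀ l, IsScalarTower R A (Δ l)]
    (N : Λ → Type) [∀ l, AddCommGroup (N l)] [∀ l, Module R (N l)]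
    [∀ l, Module A (N l)] [∀ l, IsScalarTower R A (N l)]
    (h : SplitQH R A Λ Δ) (hc : IsCostandard R A Λ Δ N)
    (T : Λ → Type) [∀ l, AddCommGroup (T l)] [∀ l, Module R (T l)]
    [∀ l, Module A (T l)] [∀ l, IsScalarTower R A (T l)]
    (hT : IsCharTilting R A Λ Δ N T) :
    (∀ (X : Type) [AddCommGroup X] [Module A X], InFilt R A Λ N Set.univ X →
      InFilt R (EndOp A (∀ i, T i)) Λᵒᵈ (ringelStandard A N (∀ i, T i)) Set.univ
        ((∀ i, T i) →ₗ[A] X)) ∧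
    (∀ (X Y : Type) [AddCommGroup X] [Module A X] [AddCommGroup Y] [Module A Y],
      InFilt R A Λ N Set.univ X →
      Function.Bijective (fun f : X →ₗ[A] Y => Gmap A (∀ i, T i) f)) ∧
    (∀ (Z : Type) [AddCommGroup Z] [Module (EndOp A (∀ i, T i)) Z],
      InFilt R (EndOp A (∀ i, T i)) Λᵒᵈ (ringelStandard A N (∀ i, T i)) Set.univ Z →
      ∃ X : ModuleCat.{0} A, InFilt R A Λ N Set.univ X ∧
        Nonempty (Z ≃ₗ[EndOp A (∀ i, T i)] ((∀ i, T i) →ₗ[A] X))) ∧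
    (∀ (X Y Z : Type) [AddCommGroup X] [Module A X] [AddCommGroup Y] [Module A Y]
      [AddCommGroup Z] [Module A Z] (f : X →ₗ[A] Y) (g : Y →ₗ[A] Z),
      InFilt R A Λ N Set.univ X → IsShortExact f g →
      IsShortExact (Gmap A (∀ i, T i) f) (Gmap A (∀ i, T i) g)) ∧
    Nonempty (SplitQH R (EndOp A (∀ i, T i)) Λᵒᵈ (ringelStandard A N (∀ i, T i))) := by
  have hN : ∀ l, FiniteProjective R (N l) := h.finiteProjective_costandard hc
  have hfin (l : Λ) : Module.Finite A (N l) :=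
    have := (hN l).finite
    .of_restrictScalars_finite R A (N l)
  have hgen := hT.isExtProjectiveGenerator hc
  refine ⟨fun X _ _ hX => ?maps, fun X Y _ _ _ _ hX => ?fullyFaithful, fun Z _ _ hZ => ?dense,
    fun X Y Z _ _ _ _ _ _ f g hX hfg => ?exact, ?splitQH⟩
  case maps => exact (hT.filt_hom hc hX.filt).inFilt (hT.finite_ringelStandard hc)
  case fullyFaithful => exact hgen.Gmap_bijective hX.filt
  case dense =>
    obtain ⟨X, hX, e⟩ := hgen.exists_equiv_of_filt (fun _ _ _ hQ => hQ.exists_equiv_hom) hZ.filt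
    exact ⟨X, hX.inFilt hfin, e⟩
  case exact => exact hfg.map_Gmap (hgen.extOrthogonal hX.filt)
  case splitQH => exact hT.nonempty_splitQH hc hN

/-- Let `T` be a characteristic tilting module of `(A, {Δ(λ)})` and
`B = End_A(T)^op`. Then `Hom_A(T, −)` restricts to an exact equivalence between `F(∇̃)`
over `A` and `F(Δ̃_B)` over `B`, where `Δ_B(λ) = Hom_A(T, ∇(λ))`; moreover
`(B, {Δ_B(λ)}_{λ ∈ Λ^op})` is a split quasi-hereditary `R`-algebra for the opposite order
on `Λ`. -/
theorem ringel_dual_functor_equivalence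
    (R : Type) [CommRing R] [IsNoetherianRing R]
    (A : Type) [Ring A] [Algebra R A]
    (Λ : Type) [Fintype Λ] [PartialOrder Λ]
    (Δ : Λ → Type) [∀ l, AddCommGroup (Δ l)] [∀ l, Module R (Δ l)]
    [∀ l, Module A (Δ l)] [∀ l, IsScalarTower R A (Δ l)]
    (Nb : Λ → Type) [∀ l, AddCommGroup (Nb l)] [∀ l, Module R (Nb l)]
    [∀ l, Module A (Nb l)] [∀ l, IsScalarTower R A (Nb l)]
    (h : SplitQH R A Λ Δ) (hc : IsCostandard R A Λ Δ Nb)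
    (T : Λ → Type) [∀ l, AddCommGroup (T l)] [∀ l, Module R (T l)]
    [∀ l, Module A (T l)] [∀ l, IsScalarTower R A (T l)]
    (hT : IsCharTilting R A Λ Δ Nb T) :
    -- `Hom_A(T, −)` maps `F(∇̃)` to `F(Δ̃_B)`
    (∀ (X : Type) [AddCommGroup X] [Module A X], InFilt R A Λ Nb Set.univ X →
      InFilt R (Module.End A (∀ i, T i))ᵐᵒᵖ Λᵒᵈ
        (fun l => ((∀ i, T i) →ₗ[A] Nb (OrderDual.ofDual l))) Set.univ
        ((∀ i, T i) →ₗ[A] X)) ∧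
    -- it is fully faithful on `F(∇̃)`
    (∀ (X Y : Type) [AddCommGroup X] [Module A X] [AddCommGroup Y] [Module A Y],
      InFilt R A Λ Nb Set.univ X → InFilt R A Λ Nb Set.univ Y →
      Function.Bijective (fun f : X →ₗ[A] Y => Gmap A (∀ i, T i) f)) ∧
    -- it is dense onto `F(Δ̃_B)`
    (∀ (Z : Type) [AddCommGroup Z] [Module (Module.End A (∀ i, T i))ᵐᵒᵖ Z],
      InFilt R (Module.End A (∀ i, T i))ᵐᵒᵖ Λᵒᵈ
        (fun l => ((∀ i, T i) →ₗ[A] Nb (OrderDual.ofDual l))) Set.univ Z →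
      ∃ X : ModuleCat.{0} A, InFilt R A Λ Nb Set.univ X ∧
        Nonempty (Z ≃ₗ[(Module.End A (∀ i, T i))ᵐᵒᵖ] ((∀ i, T i) →ₗ[A] X))) ∧
    -- it is exact on short exact sequences in `F(∇̃)`
    (∀ (X Y Z : Type) [AddCommGroup X] [Module A X] [AddCommGroup Y] [Module A Y]
      [AddCommGroup Z] [Module A Z] (f : X →ₗ[A] Y) (g : Y →ₗ[A] Z),
      InFilt R A Λ Nb Set.univ X → InFilt R A Λ Nb Set.univ Y →
      InFilt R A Λ Nb Set.univ Z →
      Function.Injective f → Function.Surjective g → Function.Exact f g →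
      (Function.Injective (Gmap A (∀ i, T i) f) ∧
        Function.Surjective (Gmap A (∀ i, T i) g) ∧
        Function.Exact (Gmap A (∀ i, T i) f) (Gmap A (∀ i, T i) g))) ∧
    -- `(B, {Δ_B(λ)})` is split quasi-hereditary with the opposite order
    Nonempty (SplitQH R (Module.End A (∀ i, T i))ᵐᵒᵖ Λᵒᵈ
      (fun l => ((∀ i, T i) →ₗ[A] Nb (OrderDual.ofDual l)))) := by
  obtain ⟨hmaps, hff, hdense, hexact, hqh⟩ :=
    ringel_dual_functor_equivalence_general R A Λ Δ Nb h hc T hT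
  refine ⟨hmaps, fun X Y _ _ _ _ hX _ => hff X Y hX, hdense, ?_, hqh⟩
  intro X Y Z _ _ _ _ _ _ f g hX _ _ hf hg hfg
  have hG := hexact X Y Z f g hX ⟨hf, hg, hfg⟩
  exact ⟨hG.injective, hG.surjective, hG.exact⟩

end
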